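/- arXiv:1704.08511 — 2 statements merged into one kernel-verified Lean document; each statement's English description precedes it below -/
import Mathlib

section
/- Let r,s≥1 and η=r+s. Let u=(u_{ij})∈W^diag_{(s^r)} with common diagonal values a_k and v=(v_{ij})∈W^diag_{(r^s)} with common diagonal values b_k, and assume Re(u_{ij})>1 for all boxes of (s^r) and Re(v_{ij})>1 for all boxes of (r^s). Then Σ_{λ⊆(s^r)} (−1)^{|λ|} ζ_λ(u|_λ) ζ_{λ*}(v|_{λ*}) = det Z, where Z is the η×η matrix whose first r rows are given, for 1≤i≤r, by Z_{i,j}=ζ⋆(a_{i−r}, a_{i−r+1}, …, a_{j−1−r}) for j≥i (so Z_{i,i}=1) and Z_{i,j}=0 for j<i, and whose last s rows are given, for 1≤i≤s, by Z_{r+i,j}=ζ⋆(b_{i−s}, b_{i−s+1}, …, b_{j−1−s}) for j≥i (so Z_{r+i,i}=1) and Z_{r+i,j}=0 for j<i (dual Cauchy formula for Schur multiple zeta functions). -/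
/-!
The right-hand side is the determinant of a block matrix with top rows `A` (built from `a`) and
bottom rows `B` (built from `b`). Generalized Laplace expansion along the top `r` rows
(`alternating_expand`, `det_unit_rows`) writes it as a signed sum, over the `r`-element sets of
columns, of a minor of `A` times the complementary minor of `B`. Partitions `λ ⊆ (s^r)` correspond
to column sets `{k + λ_{r-k}}` (`colEmb`); the complementary set is the one attached to `λ*`, and
the sign is `(-1)^|λ|` (`det_unit_rows_part`).

It remains to identify the minors with Schur multiple zeta values, which is a Jacobi–Trudi formula
(`schurZeta_eq_det`). For sums truncated at `N` it holds by comparing recursions. The truncated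
zeta-star sums satisfy `H (N+1) x y = H N x y + (N+1)^{-a (y-1)} H (N+1) x (y-1)`. Applying this to
one column of the determinant at a time lowers the bound of one row of the tableaux from `N + 1` to
`N`, or removes a box from that row (`detTrunc_step`). On the tableau side this is the distinction
whether the last box of the row contains `N + 1` (`schurTrunc_step`). As all exponents have real
part greater than `1`, all series converge absolutely, and `N → ∞` gives the formula; the entries
of the matrix converge by the same argument, as zeta-star values are Schur zeta values of one-row
shapes.
-/

open scoped BigOperators

noncomputable section

namespace SMZ

/-- Box `(i,j)` (0-indexed) lies in the Young diagram of the partition `lam`. -/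
def InDiag (lam : ℕ → ℕ) (p : ℕ × ℕ) : Prop := p.2 < lam p.1

/-- `(i,j)` is a corner of the Young diagram of `lam`. -/
def IsCorner (lam : ℕ → ℕ) (p : ℕ × ℕ) : Prop :=
  InDiag lam p ∧ ¬ InDiag lam (p.1 + 1, p.2) ∧ ¬ InDiag lam (p.1, p.2 + 1)

/-- `lam` is the part function of a partition with exactly `r` positive parts. -/
def IsPartitionWith (r : ℕ) (lam : ℕ → ℕ) : Prop :=
  Antitone lam ∧ ∀ i, 0 < lam i ↔ i < r

/-- Semi-standard Young tableau of shape `lam`, normalized to be `0` off the diagram. -/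
structure IsSSYT (lam : ℕ → ℕ) (m : ℕ × ℕ → ℕ) : Prop where
  zero_off : ∀ p, ¬ InDiag lam p → m p = 0
  pos : ∀ p, InDiag lam p → 0 < m p
  row_le : ∀ i j, InDiag lam (i, j + 1) → m (i, j) ≤ m (i, j + 1)
  col_lt : ∀ i j, InDiag lam (i + 1, j) → m (i, j) < m (i + 1, j)

/-- The summand `1 / M^s` of the Schur multiple zeta series. -/
def term (r : ℕ) (lam : ℕ → ℕ) (s : ℕ × ℕ → ℂ) (m : ℕ × ℕ → ℕ) : ℂ :=
  ∏ i ∈ Finset.range r, ∏ j ∈ Finset.range (lam i), (m (i, j) : ℂ) ^ (-(s (i, j)))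

/-- The Schur multiple zeta function `ζ_λ(s)`. -/
def schurZeta (r : ℕ) (lam : ℕ → ℕ) (s : ℕ × ℕ → ℂ) : ℂ :=
  ∑' M : {m : ℕ × ℕ → ℕ // IsSSYT lam m}, term r lam s M.1

/-- The region `W_λ` of (sufficient) absolute convergence. -/
def MemW (lam : ℕ → ℕ) (s : ℕ × ℕ → ℂ) : Prop :=
  (∀ p, InDiag lam p → 1 ≤ (s p).re) ∧ ∀ p, IsCorner lam p → 1 < (s p).re

/-- Euler–Zagier multiple zeta function. -/
def mzv {n : ℕ} (s : Fin n → ℂ) : ℂ :=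
  ∑' f : {f : Fin n → ℕ // StrictMono f ∧ ∀ i, 0 < f i},
    ∏ i, (f.1 i : ℂ) ^ (-(s i))

/-- Euler–Zagier multiple zeta-star function. -/
def mzvStar {n : ℕ} (s : Fin n → ℂ) : ℂ :=
  ∑' f : {f : Fin n → ℕ // Monotone f ∧ ∀ i, 0 < f i},
    ∏ i, (f.1 i : ℂ) ^ (-(s i))

/-- `ζ⋆(a start, a (start+1), …)` with `len` terms; `1` if `len = 0`, `0` if `len < 0`. -/
def mzvStarSeq (a : ℤ → ℂ) (start len : ℤ) : ℂ :=
  if len < 0 then 0 else mzvStar fun i : Fin len.toNat => a (start + (i : ℕ))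

/-- `ζ(a start, a (start-1), …)` with `len` terms; `1` if `len = 0`, `0` if `len < 0`. -/
def mzvSeqDesc (a : ℤ → ℂ) (start len : ℤ) : ℂ :=
  if len < 0 then 0 else mzv fun i : Fin len.toNat => a (start - (i : ℕ))

/-- The conjugate partition: `conjPart r lam c` is the number of rows `i < r` with a box
in column `c`, i.e. the (0-indexed) `c`-th part of `λ'`. -/
def conjPart (r : ℕ) (lam : ℕ → ℕ) (c : ℕ) : ℕ :=
  ((Finset.range r).filter fun i => c < lam i).card

end SMZ

/-! ### Generalized Laplace expansion -/

namespace SMZ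

/-- Expansion of an alternating form in the standard basis: the coordinates of
`w 1 ∧ ⋯ ∧ w r` in the basis of the exterior power indexed by increasing sequences `j` are the
`r × r` minors of `w` in the columns `j`. -/
theorem alternating_expand {r n : ℕ} (F : (Fin n → ℂ) [⋀^Fin r]→ₗ[ℂ] ℂ)
    (w : Fin r → Fin n → ℂ) :
    F w = ∑ j : Fin r ↪o Fin n, (Matrix.of fun i k => w i (j k)).det *
      F (fun k => Pi.single (j k) 1) := by
  classical
  let e := (Pi.basisFun ℂ (Fin n)).exteriorPower r
  have h := congrArg (exteriorPower.alternatingMapLinearEquiv F)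
    (e.sum_repr (exteriorPower.ιMulti ℂ r w))
  rw [exteriorPower.alternatingMapLinearEquiv_apply_ιMulti, map_sum] at h
  rw [← h, ← Set.powersetCard.ofFinEmbEquiv.sum_comp]
  refine Finset.sum_congr rfl fun j _ => ?_
  rw [map_smul, exteriorPower.basis_repr_apply, exteriorPower.ιMultiDual_apply_ιMulti,
    exteriorPower.basis_apply, exteriorPower.ιMulti_family,
    exteriorPower.alternatingMapLinearEquiv_apply_ιMulti]
  simp [Function.comp_def]

theorem append_update_left {r s : ℕ} {α : Type*} (w : Fin r → α) (B : Fin s → α) (i : Fin r)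
    (z : α) : Fin.append (Function.update w i z) B =
      Function.update (Fin.append w B) (Fin.castAdd s i) z := by
  funext k
  refine Fin.addCases (fun k => ?_) (fun k => ?_) k
  · by_cases hk : k = i
    · subst hk; simp
    · simp [hk]
  · have : Fin.natAdd r k ≠ Fin.castAdd s i := by
      intro h; have := congrArg Fin.val h; simp at this; omega
    simp [this]

/-- The determinant of a square matrix with fixed bottom rows `B`, as an alternating form in
its top `r` rows. -/
def detTop {r s : ℕ} (B : Fin s → Fin (r + s) → ℂ) :
    (Fin (r + s) → ℂ) [⋀^Fin r]→ₗ[ℂ] ℂ where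
  toFun w := Matrix.det (Matrix.of (Fin.append w B))
  map_update_add' w i x y := by
    have inst : ‹DecidableEq (Fin r)› = instDecidableEqFin r := Subsingleton.elim _ _
    subst inst
    rw [append_update_left, append_update_left, append_update_left]
    exact Matrix.det_updateRow_add (Matrix.of (Fin.append w B)) _ x y
  map_update_smul' w i c x := by
    have inst : ‹DecidableEq (Fin r)› = instDecidableEqFin r := Subsingleton.elim _ _
    subst inst
    rw [append_update_left, append_update_left]
    exact Matrix.det_updateRow_smul (Matrix.of (Fin.append w B)) _ c x
  map_eq_zero_of_eq' w i k h hik := by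
    refine Matrix.det_zero_of_row_eq (i := Fin.castAdd s i) (j := Fin.castAdd s k) ?_ ?_
    · simpa using hik
    · funext l
      simp [h]

/-- If the top rows are the unit vectors at the columns `j`, the determinant is, up to sign, the
minor of `B` in the complementary columns `c`. The sign is that of the permutation listing `j` and
then `c`; its inversions are the pairs `(k, l)` with `c l < j k`, of which there are `μ k` for
each `k`. -/
theorem det_unit_rows {r s : ℕ} (B : Fin s → Fin (r + s) → ℂ)
    (j : Fin r → Fin (r + s)) (c : Fin s → Fin (r + s)) (hj : StrictMono j) (hc : StrictMono c)
    (μ : Fin r → ℕ) (hμ : ∀ k, μ k ≤ s) (hlt : ∀ k l, c l < j k ↔ (l : ℕ) < μ k)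
    (hne : ∀ k l, c l ≠ j k) :
    Matrix.det (Matrix.of (Fin.append (fun k => (Pi.single (j k) 1 : Fin (r + s) → ℂ)) B)) =
      (-1) ^ (∑ k, μ k) * Matrix.det (Matrix.of fun i k => B i (c k)) := by
  classical
  have hinj : Function.Injective (Fin.append j c) := by
    intro x y
    refine Fin.addCases (fun x => ?_) (fun x => ?_) x <;>
    refine Fin.addCases (fun y => ?_) (fun y => ?_) y <;> intro h <;>
      simp only [Fin.append_left, Fin.append_right] at h
    · rw [hj.injective h]
    · exact absurd h.symm (hne _ _)
    · exact absurd h (hne _ _)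
    · rw [hc.injective h]
  let π : Equiv.Perm (Fin (r + s)) :=
    Equiv.ofBijective _ (Finite.injective_iff_bijective.mp hinj)
  have hπl : ∀ k, π (Fin.castAdd s k) = j k := fun k => Fin.append_left j c k
  have hπr : ∀ k, π (Fin.natAdd r k) = c k := fun k => Fin.append_right j c k
  set M := Matrix.of (Fin.append (fun k => (Pi.single (j k) 1 : Fin (r + s) → ℂ)) B) with hM
  have h1 := Matrix.det_permute' π M
  have h2 : (M.submatrix id π).det = Matrix.det (Matrix.of fun i k => B i (c k)) := by
    rw [← Matrix.det_submatrix_equiv_self finSumFinEquiv]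
    have : (M.submatrix id π).submatrix finSumFinEquiv finSumFinEquiv =
        Matrix.fromBlocks 1 0 (Matrix.of fun i k => B i (j k))
          (Matrix.of fun i k => B i (c k)) := by
      ext x y
      rcases x with x | x <;> rcases y with y | y
      · simp [hM, hπl, Matrix.one_apply, Pi.single_apply, hj.injective.eq_iff, eq_comm]
      · simp [hM, hπr, hne]
      · simp [hM, hπl]
      · simp [hM, hπr]
    rw [this, Matrix.det_fromBlocks_zero₁₂, Matrix.det_one, one_mul]
  have h3 : (Equiv.Perm.sign π : ℤˣ) = (-1) ^ (∑ k, μ k) := by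
    rw [Equiv.Perm.sign_eq_prod_prod_Ioi]
    -- Extend the inner product to all `y`, so that both products split over `Fin r` and `Fin s`.
    have e : ∀ x : Fin (r + s), ∏ y ∈ Finset.Ioi x, (if π x < π y then (1 : ℤˣ) else -1) =
        ∏ y, if x < y ∧ π y ≤ π x then (-1 : ℤˣ) else 1 := by
      intro x
      rw [← Finset.prod_filter_mul_prod_filter_not Finset.univ (fun y => x < y),
        Finset.prod_eq_one (s := Finset.univ.filter fun y => ¬ x < y), mul_one]
      · refine Finset.prod_congr (by ext; simp) fun y hy => ?_
        have : x < y := by simpa using hy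
        by_cases h : π x < π y
        · simp [h, not_le.mpr h]
        · simp [h, this, not_lt.mp h]
      · intro y hy
        have : ¬ x < y := by simpa using hy
        simp [this]
    simp_rw [e]
    rw [Fin.prod_univ_add]
    rw [Finset.prod_eq_one (s := (Finset.univ : Finset (Fin s))), mul_one,
      ← Finset.prod_pow_eq_pow_sum]
    · refine Finset.prod_congr rfl fun k _ => ?_
      rw [Fin.prod_univ_add, Finset.prod_eq_one (s := (Finset.univ : Finset (Fin r))), one_mul]
      · have : ∀ l : Fin s, (if Fin.castAdd s k < Fin.natAdd r l ∧
            π (Fin.natAdd r l) ≤ π (Fin.castAdd s k) then (-1 : ℤˣ) else 1) =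
            if (l : ℕ) < μ k then -1 else 1 := by
          intro l
          rw [hπl, hπr]
          have h1 : Fin.castAdd s k < Fin.natAdd r l := by
            rw [Fin.lt_def]; simp; omega
          have h2 : c l ≤ j k ↔ (l : ℕ) < μ k := by
            rw [← hlt, le_iff_lt_or_eq]; simp [hne]
          simp [h1, h2]
        simp_rw [this]
        rw [Fin.prod_univ_eq_prod_range (fun l => if l < μ k then (-1 : ℤˣ) else 1) s,
          Finset.prod_ite, Finset.prod_const, Finset.prod_const_one, mul_one]
        congr 1
        have : (Finset.range s).filter (fun l => l < μ k) = Finset.range (μ k) := by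
          ext l; simp; have := hμ k; omega
        rw [this, Finset.card_range]
      · intro l _
        rw [hπl, hπl, if_neg]
        rintro ⟨h1, h2⟩
        exact absurd (hj (show k < l from h1)) (not_lt.mpr h2)
    · intro l _
      refine Finset.prod_eq_one fun y _ => ?_
      rw [if_neg]
      refine Fin.addCases (fun y => ?_) (fun y => ?_) y
      · rintro ⟨h1, -⟩
        rw [Fin.lt_def] at h1; simp at h1; omega
      · rw [hπr, hπr]
        rintro ⟨h1, h2⟩
        exact absurd (hc (by simpa using h1)) (not_lt.mpr h2)
  rw [h2, h3] at h1
  rw [h1, ← mul_assoc]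
  push_cast
  rw [← mul_pow]
  simp

end SMZ

/-! ### Truncated Jacobi–Trudi formula -/

namespace SMZ

/-- The zeta-star sum `∑ m₁^{-c 0} ⋯ m_n^{-c (n-1)}` over `1 ≤ m₁ ≤ ⋯ ≤ m_n ≤ N`, as a function of
`N` and `n`, defined by the recursion that separates the tuples with `m_n = N + 1`. -/
def starTrunc (c : ℕ → ℂ) : ℕ → ℕ → ℂ
  | 0, 0 => 1
  | 0, _ + 1 => 0
  | _ + 1, 0 => 1
  | N + 1, n + 1 => starTrunc c N (n + 1) + ((N + 1 : ℕ) : ℂ) ^ (-(c n)) * starTrunc c (N + 1) n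

/-- The truncated zeta-star sum with exponents `a x, …, a (y - 1)`: it is `1` for `y = x` and
`0` for `y < x`. -/
def H (a : ℤ → ℂ) (N : ℕ) (x y : ℤ) : ℂ :=
  if y < x then 0 else starTrunc (fun i => a (x + i)) N (y - x).toNat

theorem H_of_lt (a : ℤ → ℂ) (N : ℕ) {x y : ℤ} (h : y < x) : H a N x y = 0 := if_pos h

theorem H_zero (a : ℤ → ℂ) (x y : ℤ) : H a 0 x y = if x = y then 1 else 0 := by
  unfold H
  rcases lt_trichotomy y x with h | h | h
  · rw [if_pos h, if_neg (by omega)]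
  · subst h; simp [starTrunc]
  · rw [if_neg (by omega), if_neg (by omega)]
    obtain ⟨n, hn⟩ : ∃ n, (y - x).toNat = n + 1 := ⟨(y - x).toNat - 1, by omega⟩
    rw [hn, starTrunc]

/-- With the convention `H a N x y = 0` for `y < x`, the recursion holds for all integers `x` and
`y`, so that it is an identity between whole columns of the Jacobi–Trudi matrix. -/
theorem H_succ (a : ℤ → ℂ) (N : ℕ) (x y : ℤ) : H a (N + 1) x y =
    H a N x y + ((N + 1 : ℕ) : ℂ) ^ (-(a (y - 1))) * H a (N + 1) x (y - 1) := by
  rcases lt_trichotomy y x with h | h | h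
  · rw [H_of_lt _ _ h, H_of_lt _ _ h, H_of_lt _ _ (by omega)]; simp
  · subst h
    rw [H_of_lt _ _ (by omega : y - 1 < y)]
    unfold H
    cases N <;> simp [starTrunc]
  · unfold H
    rw [if_neg (by omega), if_neg (by omega), if_neg (by omega)]
    obtain ⟨n, hn⟩ : ∃ n, (y - x).toNat = n + 1 := ⟨(y - x).toNat - 1, by omega⟩
    have hn' : (y - 1 - x).toNat = n := by omega
    have hx : x + (n : ℤ) = y - 1 := by omega
    rw [hn, hn', starTrunc, hx]

/-- `lam` is the part function of a partition with at most `r` positive parts. -/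
def IsPart (r : ℕ) (lam : ℕ → ℕ) : Prop := Antitone lam ∧ ∀ i, r ≤ i → lam i = 0

/-- Semi-standard tableaux of shape `lam` whose entries in row `i` are at most `β i`. -/
def boundedSSYT (β lam : ℕ → ℕ) : Set (ℕ × ℕ → ℕ) :=
  {m | IsSSYT lam m ∧ ∀ i j, j < lam i → m (i, j) ≤ β i}

theorem boundedSSYT_finite {r : ℕ} (β : ℕ → ℕ) {lam : ℕ → ℕ} (h : IsPart r lam) :
    (boundedSSYT β lam).Finite := by
  let K := ∑ i ∈ Finset.range r, β i
  refine (Set.finite_range (fun (g : Fin r × Fin (lam 0) → Fin (K + 1)) (p : ℕ × ℕ) =>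
    if hp : p.1 < r ∧ p.2 < lam 0 then (g (⟨p.1, hp.1⟩, ⟨p.2, hp.2⟩) : ℕ) else 0)).subset ?_
  rintro m ⟨hm, hb⟩
  have hbox : ∀ p : ℕ × ℕ, p.2 < lam p.1 → p.1 < r ∧ p.2 < lam 0 := by
    intro p hp
    refine ⟨?_, hp.trans_le (h.1 (Nat.zero_le _))⟩
    by_contra hr
    rw [h.2 _ (not_lt.mp hr)] at hp
    omega
  have hK : ∀ p : ℕ × ℕ, m p < K + 1 := by
    intro p
    by_cases hp : p.2 < lam p.1
    · have h1 := hb p.1 p.2 hp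
      have h2 : β p.1 ≤ K := Finset.single_le_sum (f := β) (fun _ _ => Nat.zero_le _)
        (Finset.mem_range.mpr (hbox p hp).1)
      change m p ≤ β p.1 at h1
      omega
    · rw [hm.zero_off p hp]; omega
  refine ⟨fun q => ⟨m (q.1, q.2), hK _⟩, ?_⟩
  funext p
  by_cases hp : p.1 < r ∧ p.2 < lam 0
  · simp [hp]
  · simp only [hp, dite_false]
    exact (hm.zero_off p fun h' => hp (hbox p h')).symm

/-- The Schur multiple zeta sum restricted to tableaux with row bounds `β`. -/
def schurTrunc (r : ℕ) (β lam : ℕ → ℕ) (u : ℕ × ℕ → ℂ) : ℂ :=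
  ∑ᶠ m ∈ boundedSSYT β lam, term r lam u m

/-- The flagged Jacobi–Trudi determinant; column `q` uses sums truncated at `β q`. -/
def detTrunc (a : ℤ → ℂ) (r : ℕ) (β lam : ℕ → ℕ) : ℂ :=
  Matrix.det (Matrix.of fun p q : Fin r => H a (β q) (-(p : ℕ)) ((lam q : ℤ) - (q : ℕ)))

/-- The row bounds `N` in the first `k` rows and `N + 1` in the others, interpolating between the
constant bounds `N + 1` (for `k = 0`) and `N` (for `k = r`). -/
def flag (N k i : ℕ) : ℕ := if i < k then N else N + 1

theorem IsPart.remove {r : ℕ} {lam : ℕ → ℕ} (h : IsPart r lam) {k : ℕ}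
    (hlt : lam (k + 1) < lam k) : IsPart r (Function.update lam k (lam k - 1)) := by
  constructor
  · refine antitone_nat_of_succ_le fun i => ?_
    have := h.1 (Nat.le_succ i)
    simp only [Function.update_apply, Nat.succ_eq_add_one] at *
    split_ifs <;> first | omega | (subst_vars; omega)
  · intro i hi
    have := h.2 i hi
    simp only [Function.update_apply]
    split_ifs with hk
    · subst hk; omega
    · exact this

/-- Expansion of column `k` by `H_succ`. The second summand has column `k` moved one step to the
left, which is the determinant for `lam` without the last box of row `k`; when that box is not
removable, the moved column coincides with column `k + 1`, or vanishes if `k` is the last row. -/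
theorem detTrunc_step (a : ℤ → ℂ) (r N : ℕ) {k : ℕ} (hk : k < r) {lam : ℕ → ℕ}
    (h : IsPart r lam) :
    detTrunc a r (flag N k) lam = detTrunc a r (flag N (k + 1)) lam +
      if lam (k + 1) < lam k then
        ((N + 1 : ℕ) : ℂ) ^ (-(a ((lam k : ℤ) - k - 1))) *
          detTrunc a r (flag N k) (Function.update lam k (lam k - 1))
      else 0 := by
  set M : Matrix (Fin r) (Fin r) ℂ := Matrix.of fun p q : Fin r =>
    H a (flag N k q) (-(p : ℕ)) ((lam q : ℤ) - (q : ℕ)) with hM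
  let κ : Fin r := ⟨k, hk⟩
  have hsplit : M = M.updateCol κ ((fun p : Fin r => H a N (-(p : ℕ)) ((lam k : ℤ) - k)) +
      ((N + 1 : ℕ) : ℂ) ^ (-(a ((lam k : ℤ) - k - 1))) •
        fun p : Fin r => H a (N + 1) (-(p : ℕ)) ((lam k : ℤ) - k - 1)) := by
    ext p q
    rw [Matrix.updateCol_apply]
    split_ifs with hq
    · subst hq
      simp only [hM, Matrix.of_apply, κ, flag, lt_irrefl, if_false]
      exact H_succ a N _ _
    · rfl
  have hdet : M.det = _ := congrArg Matrix.det hsplit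
  rw [Matrix.det_updateCol_add, Matrix.det_updateCol_smul] at hdet
  change M.det = _
  rw [hdet]
  congr 1
  · unfold detTrunc
    congr 1
    ext p q
    rw [Matrix.updateCol_apply]
    split_ifs with hq
    · subst hq
      simp [κ, flag]
    · have : (q : ℕ) ≠ k := fun h => hq (Fin.ext h)
      have : flag N k q = flag N (k + 1) q := by unfold flag; split_ifs <;> omega
      simp [hM, this]
  · split_ifs with hlt
    · congr 1
      unfold detTrunc
      congr 1
      ext p q
      rw [Matrix.updateCol_apply]
      split_ifs with hq
      · subst hq
        simp only [Matrix.of_apply, κ, flag, lt_irrefl, if_false, Function.update_self]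
        congr 1
        omega
      · have : (q : ℕ) ≠ k := fun h => hq (Fin.ext h)
        simp [hM, this]
    · have hge : lam (k + 1) = lam k := le_antisymm (h.1 (Nat.le_succ k)) (not_lt.mp hlt)
      refine mul_eq_zero_of_right _ ?_
      by_cases hr : k + 1 < r
      · refine Matrix.det_zero_of_column_eq (i := κ) (j := ⟨k + 1, hr⟩) ?_ ?_
        · simp [κ]
        · intro p
          have : (⟨k + 1, hr⟩ : Fin r) ≠ κ := by simp [κ]
          rw [Matrix.updateCol_self, Matrix.updateCol_ne this]
          simp only [hM, Matrix.of_apply, flag]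
          rw [if_neg (by omega), hge]
          congr 1
          push_cast
          ring
      · refine Matrix.det_eq_zero_of_column_eq_zero κ fun p => ?_
        rw [Matrix.updateCol_self]
        refine H_of_lt _ _ ?_
        have := h.2 (k + 1) (by omega)
        have := p.2
        omega

/-- The summand of a tableau is the weight of the last box of row `k` times the summand of the
tableau with that box removed. -/
theorem term_remove (r : ℕ) {k : ℕ} (hk : k < r) {lam : ℕ → ℕ} (hpos : 0 < lam k)
    (u : ℕ × ℕ → ℂ) (m : ℕ × ℕ → ℕ) :
    term r lam u m = ((m (k, lam k - 1) : ℕ) : ℂ) ^ (-(u (k, lam k - 1))) *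
      term r (Function.update lam k (lam k - 1)) u
        (Function.update m (k, lam k - 1) 0) := by
  unfold term
  have hk' : k ∈ Finset.range r := Finset.mem_range.mpr hk
  rw [← Finset.mul_prod_erase _ _ hk', ← Finset.mul_prod_erase _ _ hk', ← mul_assoc]
  congr 1
  · rw [Function.update_self]
    obtain ⟨n, hn⟩ : ∃ n, lam k = n + 1 := ⟨lam k - 1, by omega⟩
    rw [hn, Finset.prod_range_succ, mul_comm]
    congr 1
    refine Finset.prod_congr rfl fun j hj => ?_
    have := Finset.mem_range.mp hj
    rw [Function.update_of_ne]
    simp only [ne_eq, Prod.mk.injEq, not_and]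
    omega
  · refine Finset.prod_congr rfl fun i hi => ?_
    have hik := (Finset.mem_erase.mp hi).1
    rw [Function.update_of_ne hik]
    refine Finset.prod_congr rfl fun j _ => ?_
    rw [Function.update_of_ne]
    simp [hik]

/-- Rows being weakly increasing, a tableau with row `k` bounded by `N + 1` either has row `k`
bounded by `N` or has `N + 1` in the last box of row `k`. -/
theorem boundedSSYT_flag_succ (N k : ℕ) (lam : ℕ → ℕ) :
    boundedSSYT (flag N k) lam = boundedSSYT (flag N (k + 1)) lam ∪
      {m ∈ boundedSSYT (flag N k) lam | 0 < lam k ∧ m (k, lam k - 1) = N + 1} := by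
  ext m
  constructor
  · intro hm
    by_cases hc : 0 < lam k ∧ m (k, lam k - 1) = N + 1
    · exact Or.inr ⟨hm, hc⟩
    · refine Or.inl ⟨hm.1, fun i j hj => ?_⟩
      have hb := hm.2 i j hj
      by_cases hik : i = k
      · subst hik
        have hlast := hm.2 i (lam i - 1) (by omega)
        simp only [flag, lt_irrefl, if_false] at hb hlast
        have hle : ∀ d, j + d < lam i → m (i, j) ≤ m (i, j + d) := by
          intro d
          induction d with
          | zero => simp
          | succ d ih =>
            intro hd
            exact (ih (by omega)).trans (hm.1.row_le i (j + d) hd)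
        have := hle (lam i - 1 - j) (by omega)
        rw [show j + (lam i - 1 - j) = lam i - 1 by omega] at this
        simp only [flag, Nat.lt_succ_self, if_true]
        have : 0 < lam i := by omega
        have : m (i, lam i - 1) ≠ N + 1 := fun h => hc ⟨by omega, h⟩
        omega
      · refine hb.trans ?_
        unfold flag
        split_ifs <;> omega
  · rintro (hm | hm)
    · refine ⟨hm.1, fun i j hj => (hm.2 i j hj).trans ?_⟩
      unfold flag
      split_ifs <;> omega
    · exact hm.1

/-- The tableau counterpart of `detTrunc_step`: tableaux with `N + 1` in the last box of row `k`
correspond to tableaux without that box, and do not exist if the box is not removable. -/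
theorem schurTrunc_step (u : ℕ × ℕ → ℂ) (r N : ℕ) {k : ℕ} (hk : k < r) {lam : ℕ → ℕ}
    (h : IsPart r lam) :
    schurTrunc r (flag N k) lam u = schurTrunc r (flag N (k + 1)) lam u +
      if lam (k + 1) < lam k then
        ((N + 1 : ℕ) : ℂ) ^ (-(u (k, lam k - 1))) *
          schurTrunc r (flag N k) (Function.update lam k (lam k - 1)) u
      else 0 := by
  unfold schurTrunc
  rw [boundedSSYT_flag_succ N k lam, finsum_mem_union ?_ (boundedSSYT_finite _ h)
    ((boundedSSYT_finite _ h).subset (Set.sep_subset _ _))]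
  · congr 1
    split_ifs with hlt
    · have hpos : 0 < lam k := by omega
      rw [mul_finsum_mem' _ _ (boundedSSYT_finite _ (h.remove hlt))]
      refine finsum_mem_eq_of_bijOn (fun m => Function.update m (k, lam k - 1) 0) ⟨?_, ?_, ?_⟩ ?_
      · rintro m ⟨⟨hm, hb⟩, -, he⟩
        have hd : ∀ p, InDiag (Function.update lam k (lam k - 1)) p ↔
            InDiag lam p ∧ p ≠ (k, lam k - 1) := by
          rintro ⟨i, j⟩
          simp only [InDiag, Function.update_apply, ne_eq, Prod.mk.injEq]
          split_ifs with hi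
          · subst hi; omega
          · simp [hi]
        refine ⟨⟨?_, ?_, ?_, ?_⟩, ?_⟩
        · intro p hp
          by_cases hp' : p = (k, lam k - 1)
          · simp [hp']
          · beta_reduce
            rw [Function.update_of_ne hp']
            exact hm.zero_off p fun h => hp ((hd p).mpr ⟨h, hp'⟩)
        · intro p hp
          beta_reduce
          rw [Function.update_of_ne ((hd p).mp hp).2]
          exact hm.pos p ((hd p).mp hp).1
        · intro i j hij
          obtain ⟨h1, h2⟩ := (hd _).mp hij
          beta_reduce
          rw [Function.update_of_ne h2]
          refine le_trans ?_ (hm.row_le i j h1)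
          rw [Function.update_apply]; split_ifs <;> omega
        · intro i j hij
          obtain ⟨h1, h2⟩ := (hd _).mp hij
          beta_reduce
          rw [Function.update_of_ne h2]
          refine lt_of_le_of_lt ?_ (hm.col_lt i j h1)
          rw [Function.update_apply]; split_ifs <;> omega
        · intro i j hij
          obtain ⟨h1, h2⟩ := (hd (i, j)).mp hij
          show Function.update m (k, lam k - 1) 0 (i, j) ≤ _
          rw [Function.update_of_ne h2]
          exact hb i j h1
      · rintro m ⟨-, -, he⟩ m' ⟨-, -, he'⟩ hmm
        funext p
        by_cases hp : p = (k, lam k - 1)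
        · rw [hp, he, he']
        · have := congrFun hmm p
          simpa [Function.update_of_ne hp] using this
      · rintro m ⟨hm, hb⟩
        have hd : ∀ p, InDiag lam p ↔
            InDiag (Function.update lam k (lam k - 1)) p ∨ p = (k, lam k - 1) := by
          rintro ⟨i, j⟩
          simp only [InDiag, Function.update_apply, Prod.mk.injEq]
          split_ifs with hi
          · subst hi; omega
          · simp [hi]
        have hoff : ¬ InDiag (Function.update lam k (lam k - 1)) (k, lam k - 1) := by
          simp [InDiag]
        have hle : ∀ p, p.1 ≤ k → m p ≤ N + 1 := by
          intro p hp
          by_cases hp' : InDiag (Function.update lam k (lam k - 1)) p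
          · refine (hb p.1 p.2 hp').trans ?_
            unfold flag; split_ifs <;> omega
          · rw [hm.zero_off p hp']; omega
        have hlt' : ∀ p, p.1 < k → m p < N + 1 := by
          intro p hp
          by_cases hp' : InDiag (Function.update lam k (lam k - 1)) p
          · have : m p ≤ _ := hb p.1 p.2 hp'
            unfold flag at this; rw [if_pos hp] at this; omega
          · rw [hm.zero_off p hp']; omega
        have hnr : ¬ InDiag lam (k, lam k - 1 + 1) := by simp [InDiag]; omega
        have hnc : ¬ InDiag lam (k + 1, lam k - 1) := by simp [InDiag]; omega
        refine ⟨Function.update m (k, lam k - 1) (N + 1), ⟨⟨⟨?_, ?_, ?_, ?_⟩, ?_⟩, hpos, by simp⟩,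
          ?_⟩
        · intro p hp
          rw [hd] at hp
          push Not at hp
          rw [Function.update_of_ne hp.2]
          exact hm.zero_off p hp.1
        · intro p hp
          rw [Function.update_apply]
          split_ifs with hp'
          · omega
          · exact hm.pos p (((hd p).mp hp).resolve_right hp')
        · intro i j hij
          have hne : ((i, j) : ℕ × ℕ) ≠ (k, lam k - 1) := by
            rintro h0
            simp only [Prod.mk.injEq] at h0
            obtain ⟨rfl, rfl⟩ := h0
            exact hnr hij
          rw [Function.update_of_ne hne, Function.update_apply]
          split_ifs with hp'
          · refine hle _ ?_
            simp only [Prod.mk.injEq] at hp'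
            omega
          · exact hm.row_le i j (((hd _).mp hij).resolve_right hp')
        · intro i j hij
          have hne : ((i, j) : ℕ × ℕ) ≠ (k, lam k - 1) := by
            rintro h0
            simp only [Prod.mk.injEq] at h0
            obtain ⟨rfl, rfl⟩ := h0
            exact hnc hij
          rw [Function.update_of_ne hne, Function.update_apply]
          split_ifs with hp'
          · refine hlt' _ ?_
            simp only [Prod.mk.injEq] at hp'
            simp only
            omega
          · exact hm.col_lt i j (((hd _).mp hij).resolve_right hp')
        · intro i j hij
          rw [Function.update_apply]
          split_ifs with hp'
          · simp only [Prod.mk.injEq] at hp'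
            simp [flag, hp'.1]
          · exact hb i j (((hd (i, j)).mp hij).resolve_right hp')
        · funext p
          by_cases hp : p = (k, lam k - 1)
          · subst hp; simp [hm.zero_off _ hoff]
          · simp [Function.update_of_ne hp]
      · rintro m ⟨hm, -, he⟩
        rw [term_remove r hk hpos, he]
    · have hge : lam (k + 1) = lam k := le_antisymm (h.1 (Nat.le_succ k)) (not_lt.mp hlt)
      -- The box below the last box of row `k` would have to exceed `N + 1`.
      have : {m ∈ boundedSSYT (flag N k) lam | 0 < lam k ∧ m (k, lam k - 1) = N + 1} = ∅ := by
        rw [Set.eq_empty_iff_forall_notMem]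
        rintro m ⟨⟨hm, hb⟩, hpos, he⟩
        have h1 := hm.col_lt k (lam k - 1) (by unfold InDiag; simp only; omega)
        have h2 := hb (k + 1) (lam k - 1) (by omega)
        simp only [flag] at h2
        rw [if_neg (by omega)] at h2
        omega
      rw [this, finsum_mem_empty]
  · rw [Set.disjoint_left]
    rintro m ⟨hm, hb⟩ ⟨-, hpos, he⟩
    have := hb k (lam k - 1) (by omega)
    simp only [flag, Nat.lt_succ_self, if_true] at this
    omega

theorem schurTrunc_congr_bound {r : ℕ} {β β' lam : ℕ → ℕ} (h : IsPart r lam)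
    (hβ : ∀ i < r, β i = β' i) (u : ℕ × ℕ → ℂ) :
    schurTrunc r β lam u = schurTrunc r β' lam u := by
  have : boundedSSYT β lam = boundedSSYT β' lam := by
    ext m
    refine and_congr_right fun _ => forall_congr' fun i => forall_congr' fun j =>
      forall_congr' fun hj => ?_
    have : i < r := by
      by_contra hi
      rw [h.2 i (by omega)] at hj
      omega
    rw [hβ i this]
  unfold schurTrunc
  rw [this]

/-- The Jacobi–Trudi formula for truncated sums, by induction on the truncation bound `N`, on
the number of rows with bound `N + 1`, and on the length of the first such row: both sides satisfy
the same recursion. -/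
theorem schurTrunc_eq_detTrunc (a : ℤ → ℂ) (r N : ℕ) :
    ∀ {lam : ℕ → ℕ}, IsPart r lam →
      schurTrunc r (fun _ => N) lam (fun p => a ((p.2 : ℤ) - p.1)) =
        detTrunc a r (fun _ => N) lam := by
  induction N with
  | zero =>
    intro lam h
    by_cases h0 : lam 0 = 0
    · have hz : ∀ i, lam i = 0 := fun i => by have := h.1 (Nat.zero_le i); omega
      have : boundedSSYT (fun _ => 0) lam = {0} := by
        ext m
        constructor
        · rintro ⟨hm, -⟩
          funext p
          exact hm.zero_off p (by simp [InDiag, hz])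
        · rintro rfl
          exact ⟨⟨fun _ _ => rfl, fun p hp => by simp [InDiag, hz] at hp, fun _ _ _ => le_rfl,
            fun i j hp => by simp [InDiag, hz] at hp⟩, fun i j hj => by simp [hz] at hj⟩
      unfold schurTrunc detTrunc
      rw [this, finsum_mem_singleton]
      have : (Matrix.of fun p q : Fin r => H a 0 (-(p : ℕ)) ((lam q : ℤ) - (q : ℕ))) = 1 := by
        ext p q
        rw [Matrix.of_apply, H_zero, Matrix.one_apply, hz]
        congr 1
        rw [Fin.ext_iff, eq_iff_iff]
        omega
      rw [this, Matrix.det_one]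
      simp [term, hz]
    · have hr : 0 < r := by
        by_contra hr
        exact h0 (h.2 0 (by omega))
      have : boundedSSYT (fun _ => 0) lam = ∅ := by
        rw [Set.eq_empty_iff_forall_notMem]
        rintro m ⟨hm, hb⟩
        have h1 : m (0, 0) ≤ 0 := hb 0 0 (by omega)
        have h2 := hm.pos (0, 0) (by unfold InDiag; simp only; omega)
        omega
      unfold schurTrunc detTrunc
      rw [this, finsum_mem_empty]
      refine (Matrix.det_eq_zero_of_column_eq_zero ⟨0, hr⟩ fun p => ?_).symm
      rw [Matrix.of_apply, H_zero, if_neg]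
      simp only
      omega
  | succ N ih =>
    have key : ∀ d k, k + d = r → ∀ n, ∀ lam : ℕ → ℕ, IsPart r lam → lam k = n →
        schurTrunc r (flag N k) lam (fun p => a ((p.2 : ℤ) - p.1)) =
          detTrunc a r (flag N k) lam := by
      intro d
      induction d with
      | zero =>
        intro k hk n lam h _
        have hf : ∀ i < r, flag N k i = N := fun i hi => if_pos (by omega)
        rw [schurTrunc_congr_bound h hf, ih h]
        unfold detTrunc
        congr 1
        ext p q
        simp only [Matrix.of_apply, hf q q.2]
      | succ d ihd =>
        intro k hk n
        induction n with
        | zero =>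
          intro lam h hn
          rw [schurTrunc_step _ r N (by omega) h, detTrunc_step a r N (by omega) h,
            ihd (k + 1) (by omega) _ lam h rfl, if_neg (by omega), if_neg (by omega)]
        | succ n ihn =>
          intro lam h hn
          rw [schurTrunc_step _ r N (by omega) h, detTrunc_step a r N (by omega) h,
            ihd (k + 1) (by omega) _ lam h rfl]
          congr 1
          split_ifs with hlt
          · rw [ihn _ (h.remove hlt) (by simp [hn])]
            congr 4
            simp only
            omega
          · rfl
    intro lam h
    have := key r 0 (by omega) _ lam h rfl
    have hf : flag N 0 = fun _ => N + 1 := by funext i; simp [flag]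
    rwa [hf] at this

end SMZ

/-! ### Convergence and the Jacobi–Trudi formula for the zeta values -/

namespace SMZ

theorem summable_prod_pi {ι : Type*} [Fintype ι] (g : ι → ℕ → ℝ) (h0 : ∀ i n, 0 ≤ g i n)
    (hg : ∀ i, Summable (g i)) : Summable fun f : ι → ℕ => ∏ i, g i (f i) := by
  classical
  refine summable_of_sum_le (c := ∏ i, ∑' n, g i n)
    (fun f => Finset.prod_nonneg fun i _ => h0 i _) fun s => ?_
  have hsub : s ⊆ Fintype.piFinset fun i => s.image fun f => f i := by
    intro f hf
    rw [Fintype.mem_piFinset]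
    exact fun i => Finset.mem_image_of_mem _ hf
  calc ∑ f ∈ s, ∏ i, g i (f i)
      ≤ ∑ f ∈ Fintype.piFinset fun i => s.image fun f => f i, ∏ i, g i (f i) :=
        Finset.sum_le_sum_of_subset_of_nonneg hsub fun f _ _ =>
          Finset.prod_nonneg fun i _ => h0 i _
    _ = ∏ i, ∑ n ∈ s.image fun f => f i, g i n := (Finset.prod_univ_sum _ _).symm
    _ ≤ ∏ i, ∑' n, g i n := Finset.prod_le_prod
        (fun i _ => Finset.sum_nonneg fun n _ => h0 i n)
        fun i _ => (hg i).sum_le_tsum _ fun n _ => h0 i n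

/-- Forgetting the tableau inequalities, the norms are dominated by a product of convergent
series `∑ n ^ (-Re u)`. -/
theorem summable_term {r : ℕ} {lam : ℕ → ℕ} (h : IsPart r lam) (u : ℕ × ℕ → ℂ)
    (hu : ∀ p, InDiag lam p → 1 < (u p).re) :
    Summable fun M : {m : ℕ × ℕ → ℕ // IsSSYT lam m} => term r lam u M.1 := by
  refine Summable.of_norm ?_
  let ι := Σ i : Fin r, Fin (lam i)
  have hs := summable_prod_pi (ι := ι)
    (fun x n => (n : ℝ) ^ (-(u ((x.1 : ℕ), (x.2 : ℕ))).re))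
    (fun x n => Real.rpow_nonneg (Nat.cast_nonneg n) _)
    (fun x => Real.summable_nat_rpow.mpr (by
      have := hu ((x.1 : ℕ), (x.2 : ℕ)) x.2.2
      linarith))
  have hinj : Function.Injective fun (M : {m : ℕ × ℕ → ℕ // IsSSYT lam m}) (x : ι) =>
      M.1 ((x.1 : ℕ), (x.2 : ℕ)) := by
    intro M M' hMM
    refine Subtype.ext (funext fun p => ?_)
    by_cases hp : InDiag lam p
    · have hr : p.1 < r := by
        by_contra hr
        unfold InDiag at hp
        rw [h.2 _ (not_lt.mp hr)] at hp
        omega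
      exact congrFun hMM ⟨⟨p.1, hr⟩, ⟨p.2, hp⟩⟩
    · rw [M.2.zero_off p hp, M'.2.zero_off p hp]
  refine (hs.comp_injective hinj).congr fun M => ?_
  unfold term
  rw [Function.comp_apply, Fintype.prod_sigma, norm_prod,
    ← Fin.prod_univ_eq_prod_range
      (fun i => ‖∏ j ∈ Finset.range (lam i), (M.1 (i, j) : ℂ) ^ (-(u (i, j)))‖)]
  refine Finset.prod_congr rfl fun i _ => ?_
  rw [norm_prod, ← Fin.prod_univ_eq_prod_range
      (fun j => ‖(M.1 ((i : ℕ), j) : ℂ) ^ (-(u ((i : ℕ), j)))‖)]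
  refine Finset.prod_congr rfl fun j _ => ?_
  rw [Complex.norm_natCast_cpow_of_pos (M.2.pos ((i : ℕ), (j : ℕ)) j.2), Complex.neg_re]

theorem tendsto_schurTrunc {r : ℕ} {lam : ℕ → ℕ} (h : IsPart r lam) (u : ℕ × ℕ → ℂ)
    (hu : ∀ p, InDiag lam p → 1 < (u p).re) :
    Filter.Tendsto (fun N => schurTrunc r (fun _ => N) lam u) Filter.atTop
      (nhds (schurZeta r lam u)) := by
  classical
  have hfin : ∀ N : ℕ, (boundedSSYT (fun _ => N) lam).Finite := fun N => boundedSSYT_finite _ h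
  let X : ℕ → Finset {m : ℕ × ℕ → ℕ // IsSSYT lam m} := fun N =>
    (hfin N).toFinset.subtype (IsSSYT lam)
  have hX : ∀ N M, M ∈ X N ↔ ∀ i j, j < lam i → M.1 (i, j) ≤ N := by
    intro N M
    simp [X, boundedSSYT, M.2]
  have hmono : Monotone X := fun N N' hN M hM =>
    (hX _ _).mpr fun i j hj => ((hX _ _).mp hM i j hj).trans hN
  have hex : ∀ M, ∃ N, M ∈ X N := by
    intro M
    refine ⟨∑ i ∈ Finset.range r, ∑ j ∈ Finset.range (lam i), M.1 (i, j),
      (hX _ _).mpr fun i j hj => ?_⟩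
    have hr : i < r := by
      by_contra hr
      rw [h.2 _ (not_lt.mp hr)] at hj
      omega
    calc M.1 (i, j) ≤ ∑ j ∈ Finset.range (lam i), M.1 (i, j) :=
          Finset.single_le_sum (f := fun j => M.1 (i, j)) (fun _ _ => Nat.zero_le _)
            (Finset.mem_range.mpr hj)
      _ ≤ _ := Finset.single_le_sum (f := fun i => ∑ j ∈ Finset.range (lam i), M.1 (i, j))
          (fun _ _ => Nat.zero_le _) (Finset.mem_range.mpr hr)
  have ht := (summable_term h u hu).hasSum.comp
    (Filter.tendsto_atTop_finset_of_monotone hmono hex)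
  refine ht.congr fun N => ?_
  rw [Function.comp_apply]
  unfold schurTrunc
  rw [finsum_mem_eq_finite_toFinset_sum _ (hfin N)]
  exact Finset.sum_subtype_of_mem (fun m => term r lam u m)
    fun m hm => ((hfin N).mem_toFinset.mp hm).1

/-- The one-row partition `(n)`. -/
def oneRow (n i : ℕ) : ℕ := if i = 0 then n else 0

theorem isPart_oneRow (n : ℕ) : IsPart 1 (oneRow n) := by
  constructor
  · intro i j hij
    unfold oneRow
    split_ifs <;> omega
  · intro i hi
    exact if_neg (by omega)

/-- Tableaux of shape `(n)` are weakly increasing positive sequences. -/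
theorem mzvStar_eq_schurZeta (n : ℕ) (c : ℕ → ℂ) :
    mzvStar (fun i : Fin n => c i) = schurZeta 1 (oneRow n) (fun p => c p.2) := by
  have hd : ∀ i j, InDiag (oneRow n) (i, j) ↔ i = 0 ∧ j < n := by
    intro i j
    unfold InDiag oneRow
    simp only
    split_ifs with h <;> simp [h]
  let e : {f : Fin n → ℕ // Monotone f ∧ ∀ i, 0 < f i} ≃
      {m : ℕ × ℕ → ℕ // IsSSYT (oneRow n) m} :=
    { toFun := fun f => ⟨fun p => if h : p.1 = 0 ∧ p.2 < n then f.1 ⟨p.2, h.2⟩ else 0, by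
        refine ⟨?_, ?_, ?_, ?_⟩
        · rintro ⟨i, j⟩ hp
          rw [hd] at hp
          exact dif_neg hp
        · rintro ⟨i, j⟩ hp
          rw [hd] at hp
          simp only [hp, and_self, dite_true]
          exact f.2.2 _
        · intro i j hp
          rw [hd] at hp
          have h' : i = 0 ∧ j < n := ⟨hp.1, by omega⟩
          simp only [hp, h', and_self, dite_true]
          exact f.2.1 (by rw [Fin.le_def]; simp)
        · intro i j hp
          rw [hd] at hp
          omega⟩
      invFun := fun M => ⟨fun i => M.1 (0, i), by
        constructor
        · have hstep : ∀ d j, j + d < n → M.1 (0, j) ≤ M.1 (0, j + d) := by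
            intro d j
            induction d with
            | zero => simp
            | succ d ih =>
              intro hd'
              exact (ih (by omega)).trans (M.2.row_le 0 (j + d) ((hd _ _).mpr ⟨rfl, hd'⟩))
          intro i j hij
          have h := hstep ((j : ℕ) - i) i (by have := j.2; rw [Fin.le_def] at hij; omega)
          rwa [show (i : ℕ) + ((j : ℕ) - i) = j by rw [Fin.le_def] at hij; omega] at h
        · intro i
          exact M.2.pos _ ((hd _ _).mpr ⟨rfl, i.2⟩)⟩
      left_inv := by
        intro f
        ext i
        simp
      right_inv := by
        intro M
        refine Subtype.ext (funext fun p => ?_)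
        obtain ⟨i, j⟩ := p
        by_cases hp : i = 0 ∧ j < n
        · simp only [hp, and_self, dite_true]
        · simp only [hp, dite_false]
          exact (M.2.zero_off _ (by rwa [hd])).symm }
  unfold mzvStar schurZeta
  rw [← e.tsum_eq]
  refine tsum_congr fun f => ?_
  unfold term
  rw [Finset.prod_range_one, show oneRow n 0 = n from rfl,
    ← Fin.prod_univ_eq_prod_range
      (fun j => (((e f).1 (0, j) : ℕ) : ℂ) ^ (-(c j)))]
  refine Finset.prod_congr rfl fun i _ => ?_
  simp [e]

/-- Obtained from the truncated Jacobi–Trudi formula for one-row shapes, whose determinant is the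
single entry `H`. -/
theorem tendsto_H (a : ℤ → ℂ) (x y : ℤ) (ha : ∀ z, x ≤ z → z < y → 1 < (a z).re) :
    Filter.Tendsto (fun N => H a N x y) Filter.atTop (nhds (mzvStarSeq a x (y - x))) := by
  unfold mzvStarSeq
  by_cases hxy : y < x
  · rw [if_pos (by omega)]
    simp only [H_of_lt a _ hxy]
    exact tendsto_const_nhds
  · rw [if_neg (by omega)]
    set n := (y - x).toNat with hn
    rw [mzvStar_eq_schurZeta n (fun i => a (x + i))]
    have hd : ∀ p, InDiag (oneRow n) p → p.1 = 0 ∧ p.2 < n := by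
      rintro ⟨i, j⟩
      unfold InDiag oneRow
      simp only
      split_ifs with h <;> simp [h]
    have ht := tendsto_schurTrunc (isPart_oneRow n) (fun p => a (x + ((p.2 : ℤ) - p.1))) (by
      intro p hp
      obtain ⟨h1, h2⟩ := hd p hp
      exact ha _ (by omega) (by omega))
    have hz : schurZeta 1 (oneRow n) (fun p => a (x + ((p.2 : ℤ) - p.1))) =
        schurZeta 1 (oneRow n) (fun p => a (x + (p.2 : ℤ))) := by
      unfold schurZeta term
      simp
    rw [hz] at ht
    refine ht.congr fun N => ?_
    have hj := schurTrunc_eq_detTrunc (fun z => a (x + z)) 1 N (isPart_oneRow n)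
    rw [hj]
    unfold detTrunc
    rw [Matrix.det_fin_one]
    unfold H
    have hn0 : ¬ ((n : ℤ) < 0) := by omega
    simp [oneRow, hxy, ← hn]

/-- The Jacobi–Trudi formula for Schur multiple zeta values with exponents constant on diagonals,
with rows and columns of the matrix listed in reverse so that column `k` is indexed by
`k + lam (r - 1 - k)`, as in the minors of the block matrix. -/
theorem schurZeta_eq_det (a : ℤ → ℂ) (r L : ℕ) {lam : ℕ → ℕ} (h : IsPart r lam)
    (hL : lam 0 ≤ L) (ha : ∀ z : ℤ, -(r : ℤ) < z → z < L → 1 < (a z).re)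
    (u : ℕ × ℕ → ℂ) (hu : ∀ p : ℕ × ℕ, p.1 < r → p.2 < L → u p = a ((p.2 : ℤ) - p.1)) :
    schurZeta r lam u = Matrix.det (Matrix.of fun i k : Fin r =>
      mzvStarSeq a (((i : ℕ) : ℤ) + 1 - r)
        (((k : ℕ) : ℤ) + lam (r - 1 - (k : ℕ)) - (i : ℕ))) := by
  have hle : ∀ i, lam i ≤ L := fun i => (h.1 (Nat.zero_le i)).trans hL
  have hz : schurZeta r lam u = schurZeta r lam (fun p => a ((p.2 : ℤ) - p.1)) := by
    unfold schurZeta term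
    refine tsum_congr fun M => Finset.prod_congr rfl fun i hi => Finset.prod_congr rfl
      fun j hj => ?_
    rw [hu (i, j) (Finset.mem_range.mp hi) ((Finset.mem_range.mp hj).trans_le (hle i))]
  have h1 := tendsto_schurTrunc h (fun p => a ((p.2 : ℤ) - p.1)) (by
    intro p hp
    have hr : p.1 < r := by
      by_contra hr
      unfold InDiag at hp
      rw [h.2 _ (not_lt.mp hr)] at hp
      omega
    have := hle p.1
    unfold InDiag at hp
    exact ha _ (by omega) (by omega))
  have h2 : Filter.Tendsto (fun N => detTrunc a r (fun _ => N) lam) Filter.atTop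
      (nhds (Matrix.det (Matrix.of fun p q : Fin r =>
        mzvStarSeq a (-((p : ℕ) : ℤ)) ((lam q : ℤ) - (q : ℕ) - -((p : ℕ) : ℤ))))) := by
    unfold detTrunc
    refine ((continuous_id.matrix_det).tendsto _).comp ?_
    refine tendsto_pi_nhds.mpr fun p => tendsto_pi_nhds.mpr fun q => ?_
    refine tendsto_H a _ _ fun z hz1 hz2 => ha z ?_ ?_
    · have := p.2; omega
    · have := hle q; omega
  have h3 := tendsto_nhds_unique (h1.congr fun N => schurTrunc_eq_detTrunc a r N h) h2
  rw [hz, h3, ← Matrix.det_submatrix_equiv_self Fin.revPerm]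
  congr 1
  ext i k
  simp only [Matrix.submatrix_apply, Matrix.of_apply, Fin.revPerm_apply, Fin.val_rev]
  have hi := i.2
  have hk := k.2
  rw [show r - 1 - (k : ℕ) = r - ((k : ℕ) + 1) by omega]
  congr 1 <;> omega

end SMZ

/-! ### Partitions in a rectangle and column sets -/

namespace SMZ

theorem lt_conjPart {r : ℕ} {lam : ℕ → ℕ} (h : IsPart r lam) {i l : ℕ} (hi : i < r)
    (hl : l < lam i) : i + 1 ≤ conjPart r lam l := by
  unfold conjPart
  rw [← Finset.card_range (i + 1)]
  refine Finset.card_le_card fun x hx => ?_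
  rw [Finset.mem_range] at hx
  rw [Finset.mem_filter, Finset.mem_range]
  exact ⟨by omega, hl.trans_le (h.1 (by omega))⟩

theorem conjPart_le {r : ℕ} {lam : ℕ → ℕ} (h : IsPart r lam) {i l : ℕ}
    (hl : lam i ≤ l) : conjPart r lam l ≤ i := by
  unfold conjPart
  conv_rhs => rw [← Finset.card_range i]
  refine Finset.card_le_card fun x hx => ?_
  rw [Finset.mem_filter, Finset.mem_range] at hx
  rw [Finset.mem_range]
  by_contra hxi
  have := h.1 (not_lt.mp hxi)
  omega

theorem conjPart_antitone (r : ℕ) (lam : ℕ → ℕ) : Antitone (conjPart r lam) := by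
  intro l l' hl
  unfold conjPart
  refine Finset.card_le_card fun x hx => ?_
  rw [Finset.mem_filter] at hx ⊢
  exact ⟨hx.1, by omega⟩

/-- The partition `λ* = (r - λ'_s, …, r - λ'_1)`. -/
def starPart (r s : ℕ) (lam : ℕ → ℕ) (k : ℕ) : ℕ :=
  if k < s then r - conjPart r lam (s - 1 - k) else 0

theorem isPart_starPart (r s : ℕ) (lam : ℕ → ℕ) : IsPart s (starPart r s lam) := by
  constructor
  · intro k k' hk
    unfold starPart
    have := conjPart_antitone r lam (show s - 1 - k' ≤ s - 1 - k by omega)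
    split_ifs <;> omega
  · intro k hk
    exact if_neg (by omega)

theorem starPart_le (r s : ℕ) (lam : ℕ → ℕ) (k : ℕ) : starPart r s lam k ≤ r := by
  unfold starPart
  split_ifs <;> omega

/-- The cofactor of the minor attached to `lam`. The columns complementary to
`{k + lam (r - 1 - k)}` are `{l + λ* (s - 1 - l)}`, and the complementary column `l` lies to the
left of column `k` exactly when `l < lam (r - 1 - k)`. -/
theorem det_unit_rows_part {r s : ℕ} (B : Fin s → Fin (r + s) → ℂ) {lam : ℕ → ℕ}
    (h : IsPart r lam) (hs : lam 0 ≤ s) (j : Fin r → Fin (r + s))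
    (hj : ∀ k, (j k : ℕ) = k + lam (r - 1 - k)) :
    Matrix.det (Matrix.of (Fin.append (fun k => (Pi.single (j k) 1 : Fin (r + s) → ℂ)) B)) =
      (-1) ^ (∑ i : Fin r, lam i) *
        Matrix.det (Matrix.of fun i l : Fin s => B i
          ⟨(l : ℕ) + starPart r s lam (s - 1 - l), by
            have := starPart_le r s lam (s - 1 - l); omega⟩) := by
  have hsum : ∑ i : Fin r, lam i = ∑ k : Fin r, lam (r - 1 - k) := by
    rw [← Equiv.sum_comp Fin.revPerm]
    refine Finset.sum_congr rfl fun k _ => ?_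
    rw [Fin.revPerm_apply, Fin.val_rev]
    congr 1
    omega
  have hst : ∀ l : Fin s, starPart r s lam (s - 1 - l) = r - conjPart r lam l := by
    intro l
    have := l.2
    unfold starPart
    rw [if_pos (by omega)]
    congr 2
    omega
  rw [hsum]
  refine det_unit_rows B j _ ?_ ?_ _ ?_ ?_ ?_
  · intro k k' hk
    rw [Fin.lt_def] at hk ⊢
    rw [hj, hj]
    have := h.1 (show r - 1 - (k' : ℕ) ≤ r - 1 - k by omega)
    omega
  · intro l l' hl
    rw [Fin.lt_def] at hl ⊢
    simp only [hst]
    have := conjPart_antitone r lam hl.le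
    omega
  · intro k
    exact (h.1 (Nat.zero_le _)).trans hs
  · intro k l
    rw [Fin.lt_def]
    simp only [hst, hj]
    have hk := k.2
    by_cases hl : (l : ℕ) < lam (r - 1 - k)
    · have := lt_conjPart h (by omega) hl
      omega
    · have := conjPart_le h (not_lt.mp hl)
      omega
  · intro k l heq
    have heq := congrArg Fin.val heq
    simp only [hst, hj] at heq
    have hk := k.2
    by_cases hl : (l : ℕ) < lam (r - 1 - k)
    · have := lt_conjPart h (by omega) hl
      omega
    · have := conjPart_le h (not_lt.mp hl)
      omega

/-- The part function on `ℕ` of a partition given by its parts `f 0, …, f (r - 1)`. -/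
def partFn {r s : ℕ} (f : Fin r → Fin (s + 1)) (i : ℕ) : ℕ :=
  if h : i < r then (f ⟨i, h⟩ : ℕ) else 0

theorem isPart_partFn {r s : ℕ} {f : Fin r → Fin (s + 1)}
    (hf : Antitone fun i : Fin r => (f i : ℕ)) : IsPart r (partFn f) := by
  constructor
  · intro i k hik
    unfold partFn
    split_ifs with h1 h2
    · exact hf (by rw [Fin.le_def]; exact hik)
    · omega
    · omega
    · omega
  · intro i hi
    exact dif_neg (by omega)

theorem partFn_le {r s : ℕ} (f : Fin r → Fin (s + 1)) (i : ℕ) : partFn f i ≤ s := by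
  unfold partFn
  split_ifs
  · exact Fin.is_le _
  · omega

/-- The columns `k + λ_{r-k}` (for one-based parts of `λ`) of the minor attached to a partition
`λ ⊆ (s^r)`. -/
def colEmb {r s : ℕ} (f : Fin r → Fin (s + 1)) (hf : Antitone fun i : Fin r => (f i : ℕ)) :
    Fin r ↪o Fin (r + s) :=
  OrderEmbedding.ofStrictMono
    (fun k => ⟨(k : ℕ) + partFn f (r - 1 - k), by have := partFn_le f (r - 1 - k); omega⟩) (by
      intro k k' hk
      rw [Fin.lt_def] at hk ⊢
      have := (isPart_partFn hf).1 (show r - 1 - (k' : ℕ) ≤ r - 1 - k by omega)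
      simp only
      omega)

theorem colEmb_val {r s : ℕ} (f : Fin r → Fin (s + 1))
    (hf : Antitone fun i : Fin r => (f i : ℕ)) (k : Fin r) :
    (colEmb f hf k : ℕ) = k + partFn f (r - 1 - k) := rfl

theorem colEmb_injective {r s : ℕ} {f g : Fin r → Fin (s + 1)}
    (hf : Antitone fun i : Fin r => (f i : ℕ)) (hg : Antitone fun i : Fin r => (g i : ℕ))
    (h : colEmb f hf = colEmb g hg) : f = g := by
  funext i
  have h1 := congrArg Fin.val (DFunLike.congr_fun h i.rev)
  rw [colEmb_val, colEmb_val, Fin.val_rev] at h1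
  have hi := i.2
  rw [show r - 1 - (r - ((i : ℕ) + 1)) = i by omega] at h1
  simp only [partFn, i.2, dite_true, Fin.eta] at h1
  exact Fin.ext (by omega)

theorem colEmb_surjective {r s : ℕ} (j : Fin r ↪o Fin (r + s)) :
    ∃ (f : Fin r → Fin (s + 1)) (hf : Antitone fun i : Fin r => (f i : ℕ)), colEmb f hf = j := by
  -- A strictly increasing sequence grows at least as fast as its index.
  have hgrow : ∀ d (k l : Fin r), (k : ℕ) + d = l → (j k : ℕ) + d ≤ j l := by
    intro d
    induction d with
    | zero =>
      intro k l h
      have : k = l := Fin.ext (by omega)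
      simp [this]
    | succ d ih =>
      intro k l h
      have hl := l.2
      have h1 := ih k ⟨k + d, by omega⟩ rfl
      have h2 : j ⟨k + d, by omega⟩ < j l := j.strictMono (by rw [Fin.lt_def]; simp only; omega)
      rw [Fin.lt_def] at h2
      omega
  have hlow : ∀ k : Fin r, (k : ℕ) ≤ j k := by
    intro k
    have hk := k.2
    have := hgrow k ⟨0, by omega⟩ k (by simp)
    omega
  have hup : ∀ k : Fin r, (j k : ℕ) ≤ k + s := by
    intro k
    have hk := k.2
    have := hgrow (r - 1 - k) k ⟨r - 1, by omega⟩ (by simp only; omega)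
    have := (j ⟨r - 1, by omega⟩).2
    omega
  let f : Fin r → Fin (s + 1) := fun i => ⟨(j i.rev : ℕ) - (i.rev : ℕ), by
    have := hup i.rev
    omega⟩
  have hf : Antitone fun i : Fin r => (f i : ℕ) := by
    intro i k hik
    simp only [f]
    rw [Fin.le_def] at hik
    have hk := k.2
    have := hgrow ((k : ℕ) - i) k.rev i.rev (by simp only [Fin.val_rev]; omega)
    simp only [Fin.val_rev] at *
    omega
  refine ⟨f, hf, ?_⟩
  ext k
  rw [colEmb_val]
  have hk := k.2
  have hr : r - 1 - (k : ℕ) < r := by omega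
  have hrev : (⟨r - 1 - (k : ℕ), hr⟩ : Fin r).rev = k := by
    ext; simp only [Fin.val_rev]; omega
  simp only [partFn, hr, dite_true, f, hrev]
  have := hlow k
  omega

end SMZ
open scoped Classical in
/-- Dual Cauchy formula for Schur multiple zeta functions. The sum on the left runs over all
partitions `λ ⊆ (s'^r)` (encoded as antitone functions `Fin r → Fin (s'+1)`), with
`λ* = (r-λ'_{s'},…,r-λ'_1) ⊆ (r^{s'})`. -/
theorem schurZeta_dual_cauchy
    (r s' : ℕ) (hr : 0 < r) (hs' : 0 < s')
    (u v : ℕ × ℕ → ℂ) (a b : ℤ → ℂ)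
    (hu : ∀ p : ℕ × ℕ, SMZ.InDiag (fun i => if i < r then s' else 0) p →
      u p = a ((p.2 : ℤ) - (p.1 : ℤ)))
    (hv : ∀ p : ℕ × ℕ, SMZ.InDiag (fun i => if i < s' then r else 0) p →
      v p = b ((p.2 : ℤ) - (p.1 : ℤ)))
    (hure : ∀ p : ℕ × ℕ, SMZ.InDiag (fun i => if i < r then s' else 0) p → 1 < (u p).re)
    (hvre : ∀ p : ℕ × ℕ, SMZ.InDiag (fun i => if i < s' then r else 0) p → 1 < (v p).re) :
    (∑ f : Fin r → Fin (s' + 1),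
      if Antitone (fun i : Fin r => (f i : ℕ)) then
        ((-1 : ℂ) ^ (∑ i, (f i : ℕ))) *
          SMZ.schurZeta r (fun i => if h : i < r then (f ⟨i, h⟩ : ℕ) else 0) u *
          SMZ.schurZeta s'
            (fun k => if k < s' then
              r - SMZ.conjPart r (fun i => if h : i < r then (f ⟨i, h⟩ : ℕ) else 0)
                (s' - 1 - k)
              else 0) v
      else 0) =
    Matrix.det (Matrix.of fun i j : Fin (r + s') =>
      if (i : ℕ) < r then
        (if (i : ℕ) ≤ (j : ℕ) then
          SMZ.mzvStarSeq a (((i : ℕ) : ℤ) + 1 - (r : ℤ)) (((j : ℕ) : ℤ) - ((i : ℕ) : ℤ))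
        else 0)
      else
        (if (i : ℕ) - r ≤ (j : ℕ) then
          SMZ.mzvStarSeq b ((((i : ℕ) - r : ℕ) : ℤ) + 1 - (s' : ℤ))
            (((j : ℕ) : ℤ) - (((i : ℕ) - r : ℕ) : ℤ))
        else 0)) := by
  -- Every diagonal of a rectangle meets its first row or its first column.
  have ha : ∀ z : ℤ, -(r : ℤ) < z → z < s' → 1 < (a z).re := by
    intro z h1 h2
    rcases le_or_gt 0 z with hz | hz
    · have hd : SMZ.InDiag (fun i => if i < r then s' else 0) (0, z.toNat) := by
        simp only [SMZ.InDiag, hr, if_true]; omega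
      have := hure _ hd
      rw [hu _ hd] at this
      simpa [hz] using this
    · have hd : SMZ.InDiag (fun i => if i < r then s' else 0) ((-z).toNat, 0) := by
        simp only [SMZ.InDiag]; rw [if_pos (by omega)]; exact hs'
      have := hure _ hd
      rw [hu _ hd] at this
      rwa [show ((((-z).toNat, 0) : ℕ × ℕ).2 : ℤ) - ((((-z).toNat, 0) : ℕ × ℕ).1 : ℤ) = z by
        simp only; omega] at this
  have hb : ∀ z : ℤ, -(s' : ℤ) < z → z < r → 1 < (b z).re := by
    intro z h1 h2
    rcases le_or_gt 0 z with hz | hz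
    · have hd : SMZ.InDiag (fun i => if i < s' then r else 0) (0, z.toNat) := by
        simp only [SMZ.InDiag, hs', if_true]; omega
      have := hvre _ hd
      rw [hv _ hd] at this
      simpa [hz] using this
    · have hd : SMZ.InDiag (fun i => if i < s' then r else 0) ((-z).toNat, 0) := by
        simp only [SMZ.InDiag]; rw [if_pos (by omega)]; exact hr
      have := hvre _ hd
      rw [hv _ hd] at this
      rwa [show ((((-z).toNat, 0) : ℕ × ℕ).2 : ℤ) - ((((-z).toNat, 0) : ℕ × ℕ).1 : ℤ) = z by
        simp only; omega] at this
  have hu' : ∀ p : ℕ × ℕ, p.1 < r → p.2 < s' → u p = a ((p.2 : ℤ) - p.1) := fun p h1 h2 =>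
    hu p (by simp only [SMZ.InDiag, h1, if_true, h2])
  have hv' : ∀ p : ℕ × ℕ, p.1 < s' → p.2 < r → v p = b ((p.2 : ℤ) - p.1) := fun p h1 h2 =>
    hv p (by simp only [SMZ.InDiag, h1, if_true, h2])
  let A : Fin r → Fin (r + s') → ℂ := fun i j =>
    SMZ.mzvStarSeq a (((i : ℕ) : ℤ) + 1 - r) (((j : ℕ) : ℤ) - (i : ℕ))
  let B : Fin s' → Fin (r + s') → ℂ := fun i j =>
    SMZ.mzvStarSeq b (((i : ℕ) : ℤ) + 1 - s') (((j : ℕ) : ℤ) - (i : ℕ))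
  -- `mzvStarSeq` already vanishes for negative lengths, so the inner conditions are redundant.
  have hneg : ∀ (c : ℤ → ℂ) (x : ℤ) (i j : ℕ), (if i ≤ j then
      SMZ.mzvStarSeq c x ((j : ℤ) - i) else 0) = SMZ.mzvStarSeq c x ((j : ℤ) - i) := by
    intro c x i j
    split_ifs with h
    · rfl
    · rw [SMZ.mzvStarSeq, if_pos (by omega)]
  simp only [hneg]
  have hrhs : (Matrix.of fun i j : Fin (r + s') =>
      if (i : ℕ) < r then
        SMZ.mzvStarSeq a (((i : ℕ) : ℤ) + 1 - (r : ℤ)) (((j : ℕ) : ℤ) - ((i : ℕ) : ℤ))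
      else SMZ.mzvStarSeq b ((((i : ℕ) - r : ℕ) : ℤ) + 1 - (s' : ℤ))
            (((j : ℕ) : ℤ) - (((i : ℕ) - r : ℕ) : ℤ))) = Matrix.of (Fin.append A B) := by
    ext i j
    refine Fin.addCases (fun i => ?_) (fun i => ?_) i
    · simp [A]
    · simp [B]
  rw [hrhs]
  have hexp := SMZ.alternating_expand (SMZ.detTop B) A
  change Matrix.det (Matrix.of (Fin.append A B)) = _ at hexp
  rw [hexp, ← Finset.sum_filter]
  refine Finset.sum_bij (fun f hf => SMZ.colEmb f (Finset.mem_filter.mp hf).2)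
    (fun _ _ => Finset.mem_univ _) (fun f _ g _ h => SMZ.colEmb_injective _ _ h) ?_ ?_
  · intro j _
    obtain ⟨f, hf, rfl⟩ := SMZ.colEmb_surjective j
    exact ⟨f, Finset.mem_filter.mpr ⟨Finset.mem_univ _, hf⟩, rfl⟩
  · intro f hf
    have hf' := (Finset.mem_filter.mp hf).2
    have hp := SMZ.isPart_partFn hf'
    have hZu := SMZ.schurZeta_eq_det a r s' hp (SMZ.partFn_le f 0) ha u hu'
    have hZv := SMZ.schurZeta_eq_det b s' r (SMZ.isPart_starPart r s' (SMZ.partFn f))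
      (SMZ.starPart_le _ _ _ _) hb v hv'
    have hlap := SMZ.det_unit_rows_part B hp (SMZ.partFn_le f 0) (SMZ.colEmb f hf')
      (SMZ.colEmb_val f hf')
    have hsum : ∑ i : Fin r, SMZ.partFn f i = ∑ i, (f i : ℕ) :=
      Finset.sum_congr rfl fun i _ => by simp [SMZ.partFn]
    change (-1 : ℂ) ^ (∑ i, (f i : ℕ)) * SMZ.schurZeta r (SMZ.partFn f) u *
      SMZ.schurZeta s' (SMZ.starPart r s' (SMZ.partFn f)) v = _ * Matrix.det _
    rw [hlap, hZu, hZv, hsum]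
    simp only [A, B, SMZ.colEmb_val, Nat.cast_add]
    ring
end
end

section
/- Let QSym be the Hopf algebra of quasi-symmetric functions over ℤ, with antipode S. For every skew Young diagram ν and every filling γ∈T(ν,ℕ), one has S(S_ν(γ)) = (−1)^{|ν|} S_{ν#}(γ#), where ν# is the transpose of ν with respect to the anti-diagonal, γ#∈T(ν#,ℕ) is the correspondingly transposed filling, and |ν| is the number of boxes of ν. -/
/-!
The antipode formula is reciprocity for `(P, ω)`-partitions, applied to the poset of boxes of `ν`.

Label the boxes so that labels increase along rows and decrease down columns (`boxLabel`). Breaking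
ties by labels, every filling sorts the boxes in exactly one way. It is semistandard precisely when
the resulting order `w` is a linear extension of the poset; hence `S_ν(γ)` is the sum over linear
extensions `w` of the generating function of the chains `m_1 ≤ m_2 ≤ ⋯ ≤ m_N`, strict at the
descents of `w`. Sorting decreasingly in the same manner, `S_{ν#}(γ#)` is the sum, over the same
`w`, of the generating function of the chains `m_1 ≥ m_2 ≥ ⋯ ≥ m_N`, strict at the ascents of `w`
(`antipode_poset`).

It remains to see that the antipode maps the first chain series to `(-1)^N` times the second
(`antipode_chain`). When all steps are strict this is Hoffman's formula. In general one inducts on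
the number of weak steps: a weak step is a strict step plus an equality, and an equality merges two
neighbours into a chain of length `N - 1`.
-/

open scoped BigOperators

noncomputable section

namespace SMZ

/-- Box `(i,j)` (0-indexed) lies in the skew Young diagram `λ/μ`. -/
def InSkew (lam mu : ℕ → ℕ) (p : ℕ × ℕ) : Prop := mu p.1 ≤ p.2 ∧ p.2 < lam p.1

/-- `(i,j)` is a corner of the skew diagram `λ/μ`. -/
def IsSkewCorner (lam mu : ℕ → ℕ) (p : ℕ × ℕ) : Prop :=
  InSkew lam mu p ∧ ¬ InSkew lam mu (p.1 + 1, p.2) ∧ ¬ InSkew lam mu (p.1, p.2 + 1)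

/-- `(lam, mu)` is a skew pair with at most `r` rows (zero parts allowed). -/
def IsSkewPairWith (r : ℕ) (lam mu : ℕ → ℕ) : Prop :=
  Antitone lam ∧ Antitone mu ∧ (∀ i, mu i ≤ lam i) ∧ ∀ i, r ≤ i → lam i = 0

/-- Semi-standard Young tableau of skew shape `λ/μ`, normalized to be `0` off the diagram. -/
structure IsSkewSSYT (lam mu : ℕ → ℕ) (m : ℕ × ℕ → ℕ) : Prop where
  zero_off : ∀ p, ¬ InSkew lam mu p → m p = 0
  pos : ∀ p, InSkew lam mu p → 0 < m p
  row_le : ∀ i j, InSkew lam mu (i, j) → InSkew lam mu (i, j + 1) → m (i, j) ≤ m (i, j + 1)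
  col_lt : ∀ i j, InSkew lam mu (i, j) → InSkew lam mu (i + 1, j) → m (i, j) < m (i + 1, j)

/-- The summand `1 / M^s` of the skew Schur multiple zeta series. -/
def skewTerm (r : ℕ) (lam mu : ℕ → ℕ) (s : ℕ × ℕ → ℂ) (m : ℕ × ℕ → ℕ) : ℂ :=
  ∏ i ∈ Finset.range r, ∏ j ∈ Finset.Ico (mu i) (lam i), (m (i, j) : ℂ) ^ (-(s (i, j)))

/-- The skew Schur multiple zeta function `ζ_{λ/μ}(s)`. -/
def skewSchurZeta (r : ℕ) (lam mu : ℕ → ℕ) (s : ℕ × ℕ → ℂ) : ℂ :=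
  ∑' M : {m : ℕ × ℕ → ℕ // IsSkewSSYT lam mu m}, skewTerm r lam mu s M.1

/-- The region `W_{λ/μ}` of (sufficient) absolute convergence. -/
def MemWSkew (lam mu : ℕ → ℕ) (s : ℕ × ℕ → ℂ) : Prop :=
  (∀ p, InSkew lam mu p → 1 ≤ (s p).re) ∧ ∀ p, IsSkewCorner lam mu p → 1 < (s p).re

end SMZ
namespace SMZ

/-- The essential quasi-symmetric function `E_γ` as a multivariate power series in the
variables `t_1, t_2, …` (indexed by `ℕ`, variable `0` unused): the coefficient of a
monomial `d` is the number of ways to write it as `t_{m_1}^{γ_1} ⋯ t_{m_n}^{γ_n}` with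
`0 < m_1 ≤ … ≤ m_n`. -/
def Eqsym {n : ℕ} (γ : Fin n → ℕ) : MvPowerSeries ℕ ℤ := fun d =>
  (Nat.card {f : Fin n → ℕ // Monotone f ∧ (∀ i, 0 < f i) ∧
    (∑ i, Finsupp.single (f i) (γ i)) = d} : ℤ)

/-- The monomial quasi-symmetric function `M_γ` as a multivariate power series. -/
def Mqsym {n : ℕ} (γ : Fin n → ℕ) : MvPowerSeries ℕ ℤ := fun d =>
  (Nat.card {f : Fin n → ℕ // StrictMono f ∧ (∀ i, 0 < f i) ∧
    (∑ i, Finsupp.single (f i) (γ i)) = d} : ℤ)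

/-- `E_{(c start, c (start+1), …)}` with `len` terms; `1` if `len = 0`, `0` if `len < 0`. -/
def EqsymSeq (c : ℤ → ℕ) (start len : ℤ) : MvPowerSeries ℕ ℤ :=
  if len < 0 then 0 else Eqsym fun i : Fin len.toNat => c (start + (i : ℕ))

/-- `M_{(c start, c (start-1), …)}` with `len` terms; `1` if `len = 0`, `0` if `len < 0`. -/
def MqsymSeqDesc (c : ℤ → ℕ) (start len : ℤ) : MvPowerSeries ℕ ℤ :=
  if len < 0 then 0 else Mqsym fun i : Fin len.toNat => c (start - (i : ℕ))

/-- The Schur type quasi-symmetric function `S_{λ/μ}(γ)` as a multivariate power series: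
the coefficient of a monomial `d` is the number of semi-standard Young tableaux `m` of
shape `λ/μ` with `∏_{(i,j)} t_{m_{ij}}^{γ_{ij}}` equal to the monomial `d`. -/
def schurQS (r : ℕ) (lam mu : ℕ → ℕ) (γ : ℕ × ℕ → ℕ) : MvPowerSeries ℕ ℤ := fun d =>
  (Nat.card {m : ℕ × ℕ → ℕ // IsSkewSSYT lam mu m ∧
    (∑ i ∈ Finset.range r, ∑ j ∈ Finset.Ico (mu i) (lam i),
      Finsupp.single (m (i, j)) (γ (i, j))) = d} : ℤ)

end SMZ
namespace SMZ

/-! ### Generating functions of families of positive labellings -/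

/-- The generating function `∑_g ∏_i t_{g i}^{a i}` over all labellings `g` of `ι` by positive
integers that satisfy `P`. -/
def labelGF {ι : Type*} [Fintype ι] (P : (ι → ℕ) → Prop) (a : ι → ℕ) : MvPowerSeries ℕ ℤ :=
  fun d => (Nat.card {g : ι → ℕ // P g ∧ (∀ i, 0 < g i) ∧
    ∑ i, Finsupp.single (g i) (a i) = d} : ℤ)

section labelGF

variable {ι κ : Type*} [Fintype ι] [Fintype κ]

/-- With positive exponents, every label occurring in a monomial lies in its support, so each
coefficient counts a finite set. -/
lemma finite_labellings (P : (ι → ℕ) → Prop) (a : ι → ℕ) (ha : ∀ i, 0 < a i) (d : ℕ →₀ ℕ) :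
    Finite {g : ι → ℕ // P g ∧ (∀ i, 0 < g i) ∧ ∑ i, Finsupp.single (g i) (a i) = d} := by
  classical
  have h : Set.Finite {g : ι → ℕ | ∀ i, g i ∈ d.support} := by
    have := Set.Finite.pi (t := fun _ : ι => (↑d.support : Set ℕ))
      (fun _ => d.support.finite_toSet)
    refine this.subset ?_
    intro g hg i _
    exact hg i
  refine (h.subset ?_ : Set.Finite {g : ι → ℕ | P g ∧ (∀ i, 0 < g i) ∧
    ∑ i, Finsupp.single (g i) (a i) = d})
  rintro g ⟨-, -, hd⟩ i
  rw [Finsupp.mem_support_iff, ← hd, Finsupp.finsetSum_apply]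
  have h1 := Finset.single_le_sum (f := fun k => Finsupp.single (g k) (a k) (g i))
    (fun k _ => Nat.zero_le _) (Finset.mem_univ i)
  have h2 := ha i
  simp only [Finsupp.single_eq_same] at h1
  omega

lemma labelGF_congr {P Q : (ι → ℕ) → Prop} (h : ∀ g, P g ↔ Q g) (a : ι → ℕ) :
    labelGF P a = labelGF Q a := by
  have : P = Q := funext fun g => propext (h g)
  rw [this]

lemma labelGF_eq_zero {P : (ι → ℕ) → Prop} (h : ∀ g, ¬ P g) (a : ι → ℕ) :
    labelGF P a = 0 := by
  funext d
  have : IsEmpty {g : ι → ℕ // P g ∧ (∀ i, 0 < g i) ∧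
    ∑ i, Finsupp.single (g i) (a i) = d} := ⟨fun g => h _ g.2.1⟩
  simp only [labelGF, Nat.card_of_isEmpty]
  rfl

/-- A family of labellings each of which selects exactly one `w` is split according to `w`. -/
lemma labelGF_fiberwise {W : Type*} [Fintype W] (P : (ι → ℕ) → Prop) (Q : W → (ι → ℕ) → Prop)
    (hQ : ∀ g, P g → ∃! w, Q w g) (a : ι → ℕ) (ha : ∀ i, 0 < a i) :
    labelGF P a = ∑ w, labelGF (fun g => P g ∧ Q w g) a := by
  funext d
  have hs : (∑ w, labelGF (fun g => P g ∧ Q w g) a) d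
      = ∑ w, labelGF (fun g => P g ∧ Q w g) a d := Finset.sum_apply d _ _
  rw [hs]
  simp only [labelGF]
  have := fun w => finite_labellings (fun g => P g ∧ Q w g) a ha d
  rw [← Nat.cast_sum, ← Nat.card_sigma]
  congr 1
  symm
  refine Nat.card_congr (Equiv.ofBijective (fun x => ⟨x.2.1, x.2.2.1.1, x.2.2.2⟩) ⟨?_, ?_⟩)
  · rintro ⟨w, g, hg⟩ ⟨w', g', hg'⟩ h
    simp only [Subtype.mk.injEq] at h
    subst h
    obtain rfl := (hQ g hg.1.1).unique hg.1.2 hg'.1.2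
    rfl
  · rintro ⟨g, hP, hg⟩
    obtain ⟨w, hw, -⟩ := hQ g hP
    exact ⟨⟨w, g, ⟨hP, hw⟩, hg⟩, rfl⟩

lemma labelGF_split (P Q : (ι → ℕ) → Prop) (a : ι → ℕ) (ha : ∀ i, 0 < a i) :
    labelGF P a = labelGF (fun g => P g ∧ Q g) a + labelGF (fun g => P g ∧ ¬ Q g) a := by
  rw [labelGF_fiberwise (W := Bool) P (fun b g => if b then Q g else ¬ Q g) ?_ a ha]
  · simp
  · intro g _
    by_cases h : Q g
    · exact ⟨true, by simpa using h, by intro b; cases b <;> simp [h]⟩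
    · exact ⟨false, by simpa using h, by intro b; cases b <;> simp [h]⟩

/-- If all labellings satisfying `P` are constant on the fibres of a surjection `π`, they may be
counted on the target, where exponents in a fibre add up. -/
lemma labelGF_comp (π : ι → κ) (hπ : Function.Surjective π) (P : (ι → ℕ) → Prop)
    (hP : ∀ g, P g → ∃ g', g = g' ∘ π) (a : ι → ℕ) (b : κ → ℕ)
    (hab : ∀ g' : κ → ℕ, ∑ i, Finsupp.single (g' (π i)) (a i) = ∑ k, Finsupp.single (g' k) (b k)) :
    labelGF P a = labelGF (fun g' => P (g' ∘ π)) b := by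
  funext d
  simp only [labelGF]
  congr 1
  symm
  refine Nat.card_congr (Equiv.ofBijective
    (fun x => ⟨x.1 ∘ π, x.2.1, fun i => x.2.2.1 (π i), (hab x.1).trans x.2.2.2⟩) ⟨?_, ?_⟩)
  · rintro ⟨g, hg⟩ ⟨g', hg'⟩ h
    simp only [Subtype.mk.injEq] at h ⊢
    exact hπ.injective_comp_right h
  · rintro ⟨g, hg, hpos, hd⟩
    obtain ⟨g', rfl⟩ := hP g hg
    refine ⟨⟨g', hg, fun k => ?_, (hab g').symm.trans hd⟩, rfl⟩
    obtain ⟨i, rfl⟩ := hπ k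
    exact hpos i

lemma labelGF_equiv (e : ι ≃ κ) (P : (ι → ℕ) → Prop) (a : ι → ℕ) :
    labelGF P a = labelGF (fun g' => P (g' ∘ e)) (a ∘ e.symm) := by
  refine labelGF_comp e e.surjective P (fun g _ => ⟨g ∘ e.symm, by ext; simp⟩) a _ ?_
  intro g'
  exact Fintype.sum_equiv e _ _ (by simp)

/-- Exponents of the word obtained by merging the fibres of `π`. -/
def mergedExponent {κ : Type*} [DecidableEq κ] (π : ι → κ) (a : ι → ℕ) (k : κ) : ℕ :=
  ∑ i with π i = k, a i

lemma labelGF_merge [DecidableEq κ] (π : ι → κ) (hπ : Function.Surjective π)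
    (P : (ι → ℕ) → Prop) (hP : ∀ g, P g → ∃ g', g = g' ∘ π) (a : ι → ℕ) :
    labelGF P a = labelGF (fun g' => P (g' ∘ π)) (mergedExponent π a) := by
  refine labelGF_comp π hπ P hP a _ fun g' => ?_
  rw [← Finset.sum_fiberwise Finset.univ π]
  refine Finset.sum_congr rfl fun k _ => ?_
  rw [mergedExponent, Finsupp.single_finsetSum]
  refine Finset.sum_congr rfl fun i hi => ?_
  rw [(Finset.mem_filter.1 hi).2]

lemma mergedExponent_pos {κ : Type*} [DecidableEq κ] (π : ι → κ) (hπ : Function.Surjective π)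
    (a : ι → ℕ) (ha : ∀ i, 0 < a i) (k : κ) : 0 < mergedExponent π a k := by
  obtain ⟨i, rfl⟩ := hπ k
  exact Finset.sum_pos (fun i _ => ha i) ⟨i, by simp⟩

end labelGF

/-! ### Chains -/

/-- `g 0 ≤ g 1 ≤ ⋯`, where `g i ≤ g (i+1)` is allowed to be an equality only for `i ∈ W`. -/
def IsChainUp (W : Finset ℕ) {N : ℕ} (g : Fin N → ℕ) : Prop :=
  ∀ i j : Fin N, (i : ℕ) + 1 = j → g i ≤ g j ∧ ((i : ℕ) ∉ W → g i < g j)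

/-- `g 0 ≥ g 1 ≥ ⋯`, where `g i > g (i+1)` is required for `i ∈ W`. -/
def IsChainDown (W : Finset ℕ) {N : ℕ} (g : Fin N → ℕ) : Prop :=
  ∀ i j : Fin N, (i : ℕ) + 1 = j → g j ≤ g i ∧ ((i : ℕ) ∈ W → g j < g i)

lemma strictMono_iff_consecutive {α : Type*} [Preorder α] {N : ℕ} (f : Fin N → α) :
    StrictMono f ↔ ∀ i j : Fin N, (i : ℕ) + 1 = j → f i < f j := by
  refine ⟨fun h i j hij => h (Fin.lt_def.2 (by omega)), fun h => ?_⟩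
  cases N with
  | zero => exact fun i => i.elim0
  | succ n => exact Fin.strictMono_iff_lt_succ.2 fun i => h _ _ (by simp)

lemma antitone_iff_consecutive {α : Type*} [Preorder α] {N : ℕ} (f : Fin N → α) :
    Antitone f ↔ ∀ i j : Fin N, (i : ℕ) + 1 = j → f j ≤ f i := by
  refine ⟨fun h i j hij => h (Fin.le_def.2 (by omega)), fun h => ?_⟩
  cases N with
  | zero => exact fun i => i.elim0
  | succ n => exact Fin.antitone_iff_succ_le.2 fun i => h _ _ (by simp)

/-- The surjection identifying positions `k` and `k + 1`. -/
def collapse {n : ℕ} (k : ℕ) (hk : k < n) (i : Fin (n + 1)) : Fin n :=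
  ⟨if (i : ℕ) ≤ k then i else i - 1, by split_ifs <;> omega⟩

lemma collapse_surjective {n k : ℕ} (hk : k < n) : Function.Surjective (collapse k hk) := by
  intro j
  by_cases h : (j : ℕ) ≤ k
  · exact ⟨j.castSucc, by ext; simp [collapse, h]⟩
  · refine ⟨j.succ, ?_⟩
    ext
    simp only [collapse, Fin.val_succ]
    split_ifs <;> omega

lemma factors_collapse {n k : ℕ} (hk : k < n) (g : Fin (n + 1) → ℕ)
    (h : g ⟨k, by omega⟩ = g ⟨k + 1, by omega⟩) : ∃ g', g = g' ∘ collapse k hk := by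
  refine ⟨fun j => if (j : ℕ) ≤ k then g j.castSucc else g j.succ, ?_⟩
  funext i
  rcases Nat.lt_trichotomy (i : ℕ) (k + 1) with hi | hi | hi
  · have e : collapse k hk i = ⟨i, by omega⟩ := by
      ext; simp only [collapse]; split_ifs <;> omega
    simp only [Function.comp, e]
    rw [if_pos (by omega)]
    rfl
  · have e : collapse k hk i = ⟨k, hk⟩ := by
      ext; simp only [collapse]; split_ifs <;> omega
    simp only [Function.comp, e, le_refl, if_true]
    obtain rfl : i = ⟨k + 1, Nat.succ_lt_succ hk⟩ := Fin.ext hi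
    exact h.symm
  · have e : collapse k hk i = ⟨i - 1, by omega⟩ := by
      ext; simp only [collapse]; split_ifs <;> omega
    simp only [Function.comp, e]
    rw [if_neg (by omega)]
    congr 1
    ext
    simp only [Fin.val_succ]
    omega

/-- Merging the last weak step `k` of an increasing chain. -/
lemma chainUp_collapse {n k : ℕ} (hk : k < n) (W : Finset ℕ) (hW : ∀ x ∈ W, x < k)
    (g' : Fin n → ℕ) :
    (IsChainUp (insert k W) (g' ∘ collapse k hk) ∧
      ¬ (g' ∘ collapse k hk) ⟨k, by omega⟩ < (g' ∘ collapse k hk) ⟨k + 1, by omega⟩) ↔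
    IsChainUp W g' := by
  have hkW : ∀ x, k ≤ x → x ∉ W := fun x hx h => absurd (hW x h) (by omega)
  constructor
  · rintro ⟨h, -⟩ i j hij
    by_cases hj : (j : ℕ) ≤ k
    · have := h i.castSucc j.castSucc (by simpa using hij)
      have hi : (i : ℕ) ≤ k := by omega
      have hik : (i : ℕ) ≠ k := by omega
      simpa [collapse, hj, hi, hik] using this
    · have := h i.succ j.succ (by simpa using hij)
      have e1 : collapse k hk i.succ = i := by
        ext; simp only [collapse, Fin.val_succ]; split_ifs <;> omega
      have e2 : collapse k hk j.succ = j := by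
        ext; simp only [collapse, Fin.val_succ]; split_ifs <;> omega
      simp only [Function.comp, e1, e2] at this
      have h3 : (i.succ : ℕ) ∉ insert k W := by
        rw [Finset.mem_insert, not_or]
        simp only [Fin.val_succ]
        exact ⟨by omega, hkW _ (by omega)⟩
      exact ⟨this.1, fun _ => this.2 h3⟩
  · intro h
    have e : collapse k hk ⟨k + 1, by omega⟩ = collapse k hk ⟨k, by omega⟩ := by
      ext; simp [collapse]
    refine ⟨fun i j hij => ?_, by simp [e]⟩
    rcases Nat.lt_trichotomy (i : ℕ) k with hi | hi | hi
    · have := h (collapse k hk i) (collapse k hk j)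
        (by simp only [collapse]; split_ifs <;> omega)
      have e1 : (collapse k hk i : ℕ) = i := by simp only [collapse]; split_ifs <;> omega
      rw [e1] at this
      exact ⟨this.1, fun hn => this.2 fun hm => hn (Finset.mem_insert_of_mem hm)⟩
    · have e1 : collapse k hk i = collapse k hk j := by
        ext; simp only [collapse]; split_ifs <;> omega
      exact ⟨by simp [e1], fun hn => absurd (Finset.mem_insert.2 (Or.inl hi)) hn⟩
    · have := h (collapse k hk i) (collapse k hk j)
        (by simp only [collapse]; split_ifs <;> omega)
      have e1 : (collapse k hk i : ℕ) = i - 1 := by simp only [collapse]; split_ifs <;> omega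
      rw [e1] at this
      exact ⟨this.1, fun hn => this.2 (hkW _ (by omega))⟩

/-- Merging a weak step `k` of a decreasing chain, beyond all its strict steps. -/
lemma chainDown_collapse {n k : ℕ} (hk : k < n) (W : Finset ℕ) (hW : ∀ x ∈ W, x < k)
    (g' : Fin n → ℕ) :
    (IsChainDown W (g' ∘ collapse k hk) ∧
      ¬ (g' ∘ collapse k hk) ⟨k + 1, by omega⟩ < (g' ∘ collapse k hk) ⟨k, by omega⟩) ↔
    IsChainDown W g' := by
  constructor
  · rintro ⟨h, -⟩ i j hij
    by_cases hj : (j : ℕ) ≤ k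
    · have := h i.castSucc j.castSucc (by simpa using hij)
      have hi : (i : ℕ) ≤ k := by omega
      simpa [collapse, hj, hi] using this
    · have := h i.succ j.succ (by simpa using hij)
      have e1 : collapse k hk i.succ = i := by
        ext; simp only [collapse, Fin.val_succ]; split_ifs <;> omega
      have e2 : collapse k hk j.succ = j := by
        ext; simp only [collapse, Fin.val_succ]; split_ifs <;> omega
      simp only [Function.comp, e1, e2] at this
      exact ⟨this.1, fun hm => absurd (hW _ hm) (by omega)⟩
  · intro h
    have e : collapse k hk ⟨k + 1, by omega⟩ = collapse k hk ⟨k, by omega⟩ := by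
      ext; simp [collapse]
    refine ⟨fun i j hij => ?_, by simp [e]⟩
    by_cases hi : (i : ℕ) = k
    · have e1 : collapse k hk i = collapse k hk j := by
        ext; simp only [collapse]; split_ifs <;> omega
      exact ⟨by simp [e1], fun hm => absurd (hW _ hm) (by omega)⟩
    · have := h (collapse k hk i) (collapse k hk j)
        (by simp only [collapse]; split_ifs <;> omega)
      refine ⟨this.1, fun hm => this.2 ?_⟩
      have e1 : (collapse k hk i : ℕ) = i := by
        have := hW _ hm
        simp only [collapse]; split_ifs <;> omega
      rwa [e1]

lemma chainUp_insert {n k : ℕ} (hk : k < n) (W : Finset ℕ) (hW : ∀ x ∈ W, x < k)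
    (g : Fin (n + 1) → ℕ) :
    (IsChainUp (insert k W) g ∧ g ⟨k, by omega⟩ < g ⟨k + 1, by omega⟩) ↔ IsChainUp W g := by
  have hkW : k ∉ W := fun h => absurd (hW k h) (by omega)
  constructor
  · rintro ⟨h, hs⟩ i j hij
    refine ⟨(h i j hij).1, fun hi => ?_⟩
    by_cases hik : (i : ℕ) = k
    · obtain rfl : i = ⟨k, Nat.lt_succ_of_lt hk⟩ := Fin.ext hik
      obtain rfl : j = ⟨k + 1, Nat.succ_lt_succ hk⟩ := Fin.ext hij.symm
      exact hs
    · exact (h i j hij).2 (by simp [hik, hi])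
  · intro h
    refine ⟨fun i j hij => ⟨(h i j hij).1, fun hi => (h i j hij).2 ?_⟩, (h _ _ rfl).2 hkW⟩
    exact fun hm => hi (Finset.mem_insert_of_mem hm)

lemma chainDown_insert {n k : ℕ} (hk : k < n) (W : Finset ℕ) (g : Fin (n + 1) → ℕ) :
    (IsChainDown W g ∧ g ⟨k + 1, by omega⟩ < g ⟨k, by omega⟩) ↔
      IsChainDown (insert k W) g := by
  constructor
  · rintro ⟨h, hs⟩ i j hij
    refine ⟨(h i j hij).1, fun hi => ?_⟩
    by_cases hik : (i : ℕ) = k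
    · obtain rfl : i = ⟨k, Nat.lt_succ_of_lt hk⟩ := Fin.ext hik
      obtain rfl : j = ⟨k + 1, Nat.succ_lt_succ hk⟩ := Fin.ext hij.symm
      exact hs
    · exact (h i j hij).2 (by simpa [hik] using hi)
  · intro h
    exact ⟨fun i j hij => ⟨(h i j hij).1, fun hi => (h i j hij).2 (Finset.mem_insert_of_mem hi)⟩,
      (h _ _ rfl).2 (Finset.mem_insert_self _ _)⟩

lemma Mqsym_eq_labelGF {N : ℕ} (a : Fin N → ℕ) : Mqsym a = labelGF (IsChainUp ∅) a := by
  have : (IsChainUp ∅ : (Fin N → ℕ) → Prop) = StrictMono := by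
    funext g
    rw [strictMono_iff_consecutive]
    simp only [IsChainUp, Finset.notMem_empty, not_false_eq_true, true_imp_iff]
    exact propext ⟨fun h i j hij => (h i j hij).2,
      fun h i j hij => ⟨(h i j hij).le, h i j hij⟩⟩
  rw [this]
  rfl

lemma Eqsym_rev_eq_labelGF {N : ℕ} (a : Fin N → ℕ) :
    Eqsym (fun i => a i.rev) = labelGF (IsChainDown ∅) a := by
  rw [labelGF_equiv Fin.revPerm]
  have : (fun g : Fin N → ℕ => IsChainDown ∅ (g ∘ Fin.revPerm)) = Monotone := by
    funext g
    have h : IsChainDown ∅ (g ∘ Fin.revPerm) ↔ Antitone (g ∘ Fin.revPerm) := by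
      rw [antitone_iff_consecutive]
      simp [IsChainDown]
    rw [h]
    refine propext ⟨fun h i j hij => ?_, fun h i j hij => h (Fin.rev_le_rev.2 hij)⟩
    have := h (Fin.rev_le_rev.2 hij)
    simpa using this
  rw [this]
  rfl

/-! ### The antipode on chains and on labelled posets -/

/-- Hoffman's formula for the antipode on the monomial quasi-symmetric functions. -/
def IsAntipode (S : MvPowerSeries ℕ ℤ →ₗ[ℤ] MvPowerSeries ℕ ℤ) : Prop :=
  ∀ (n : ℕ) (c : Fin n → ℕ), (∀ i, 0 < c i) →
    S (Mqsym c) = ((-1 : ℤ) ^ n) • Eqsym fun i => c i.rev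

/-- The antipode reverses chains and exchanges weak and strict steps. A weak step `k` gives
`weak = strict + equal` on one side and `strict = weak - equal` on the other; merging the equal
positions shortens the chain by one, which accounts for the sign. -/
lemma antipode_chain {S : MvPowerSeries ℕ ℤ →ₗ[ℤ] MvPowerSeries ℕ ℤ} (hS : IsAntipode S)
    (W : Finset ℕ) : ∀ (N : ℕ) (a : Fin N → ℕ), (∀ i, 0 < a i) → (∀ x ∈ W, x + 1 < N) →
      S (labelGF (IsChainUp W) a) = ((-1 : ℤ) ^ N) • labelGF (IsChainDown W) a := by
  induction W using Finset.induction_on_max with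
  | empty =>
    intro N a ha _
    rw [← Mqsym_eq_labelGF, hS N a ha, Eqsym_rev_eq_labelGF]
  | insert k W hW ih =>
    intro N a ha hN
    obtain ⟨n, rfl⟩ : ∃ n, N = n + 1 := ⟨N - 1, by have := hN k (by simp); omega⟩
    have hk : k < n := by have := hN k (by simp); omega
    have hsurj := collapse_surjective hk
    have up : labelGF (IsChainUp (insert k W)) a = labelGF (IsChainUp W) a +
        labelGF (IsChainUp W) (mergedExponent (collapse k hk) a) := by
      rw [labelGF_split _ (fun g => g ⟨k, by omega⟩ < g ⟨k + 1, by omega⟩) a ha,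
        labelGF_congr (chainUp_insert hk W hW), labelGF_merge (collapse k hk) hsurj
          (fun g => IsChainUp (insert k W) g ∧ ¬ g ⟨k, by omega⟩ < g ⟨k + 1, by omega⟩),
        labelGF_congr (chainUp_collapse hk W hW)]
      rintro g ⟨hg, hn⟩
      exact factors_collapse hk g
        (le_antisymm (hg ⟨k, by omega⟩ ⟨k + 1, by omega⟩ rfl).1 (not_lt.1 hn))
    have down : labelGF (IsChainDown W) a = labelGF (IsChainDown (insert k W)) a +
        labelGF (IsChainDown W) (mergedExponent (collapse k hk) a) := by
      rw [labelGF_split _ (fun g => g ⟨k + 1, by omega⟩ < g ⟨k, by omega⟩) a ha,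
        labelGF_congr (chainDown_insert hk W), labelGF_merge (collapse k hk) hsurj
          (fun g => IsChainDown W g ∧ ¬ g ⟨k + 1, by omega⟩ < g ⟨k, by omega⟩),
        labelGF_congr (chainDown_collapse hk W hW)]
      rintro g ⟨hg, hn⟩
      exact factors_collapse hk g
        (le_antisymm (not_lt.1 hn) (hg ⟨k, by omega⟩ ⟨k + 1, by omega⟩ rfl).1)
    have hWn : ∀ x ∈ W, x + 1 < n := fun x hx => by have := hW x hx; omega
    rw [up, map_add, ih (n + 1) a ha (fun x hx => by have := hWn x hx; omega),
      ih n _ (mergedExponent_pos _ hsurj a ha) hWn, down, pow_succ]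
    module

/-- A finite type is sorted by an injective key in exactly one way. -/
lemma existsUnique_sorting {ι L : Type*} [Fintype ι] [LinearOrder L] (F : ι → L)
    (hF : Function.Injective F) :
    ∃! w : Fin (Fintype.card ι) ≃ ι, StrictMono (fun i => F (w i)) := by
  let _ : LinearOrder ι := LinearOrder.lift' F hF
  refine ⟨(Fintype.orderIsoFinOfCardEq ι rfl).toEquiv,
    fun i j hij => (Fintype.orderIsoFinOfCardEq ι rfl).strictMono hij, fun w hw => ?_⟩
  have h1 : StrictMono (fun i => F ((Fintype.orderIsoFinOfCardEq ι rfl) i)) :=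
    fun i j hij => (Fintype.orderIsoFinOfCardEq ι rfl).strictMono hij
  have h2 := (StrictMono.range_inj hw h1).1 (by
    have e1 : Set.range (fun i => F (w i)) = Set.range F := w.surjective.range_comp F
    have e2 : Set.range (fun i => F ((Fintype.orderIsoFinOfCardEq ι rfl) i)) = Set.range F :=
      (Fintype.orderIsoFinOfCardEq ι rfl).surjective.range_comp F
    rw [e1, e2])
  ext i
  exact hF (congrFun h2 i)

section poset

variable {ι L : Type*} [LinearOrder L]

/-- The positions at which the word `l ∘ w` ascends. -/
def ascents (l : ι → L) {N : ℕ} (w : Fin N ≃ ι) : Finset ℕ :=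
  (Finset.univ.filter fun i : Fin N =>
    ∃ j : Fin N, (i : ℕ) + 1 = j ∧ l (w i) < l (w j)).image Fin.val

lemma mem_ascents (l : ι → L) {N : ℕ} (w : Fin N ≃ ι) (i j : Fin N) (hij : (i : ℕ) + 1 = j) :
    (i : ℕ) ∈ ascents l w ↔ l (w i) < l (w j) := by
  simp only [ascents, Finset.mem_image, Finset.mem_filter, Finset.mem_univ, true_and]
  constructor
  · rintro ⟨i', ⟨j', h1, h2⟩, h3⟩
    obtain rfl : i' = i := Fin.ext h3
    obtain rfl : j' = j := Fin.ext (by omega)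
    exact h2
  · exact fun h => ⟨i, ⟨j, hij, h⟩, rfl⟩

lemma lt_of_mem_ascents (l : ι → L) {N : ℕ} (w : Fin N ≃ ι) : ∀ x ∈ ascents l w, x + 1 < N := by
  intro x hx
  simp only [ascents, Finset.mem_image, Finset.mem_filter, Finset.mem_univ, true_and] at hx
  obtain ⟨i, ⟨j, h1, -⟩, rfl⟩ := hx
  omega

/-- The sorting key: compare labels first and break ties by `l`. -/
def sortKey {ι L : Type*} (l : ι → L) (m : ι → ℕ) (p : ι) : ℕ ×ₗ L := toLex (m p, l p)

lemma sortKey_lt {l : ι → L} {m : ι → ℕ} {p q : ι} :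
    sortKey l m p < sortKey l m q ↔ m p < m q ∨ m p = m q ∧ l p < l q := by
  simp [sortKey, Prod.Lex.toLex_lt_toLex]

lemma sortKey_injective {ι L : Type*} {l : ι → L} (hl : Function.Injective l) (m : ι → ℕ) :
    Function.Injective (sortKey l m) := by
  intro p q h
  have : (m p, l p) = (m q, l q) := toLex.injective h
  exact hl (Prod.ext_iff.1 this).2

lemma strictMono_sortKey_iff {l : ι → L} {N : ℕ} (w : Fin N ≃ ι) (m : ι → ℕ) :
    StrictMono (fun i => sortKey l m (w i)) ↔ IsChainUp (ascents l w) (m ∘ w) := by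
  rw [strictMono_iff_consecutive]
  refine forall_congr' fun i => forall_congr' fun j => forall_congr' fun hij => ?_
  rw [sortKey_lt, mem_ascents l w i j hij]
  simp only [Function.comp]
  by_cases h : l (w i) < l (w j) <;> simp only [h] <;> grind

lemma strictAnti_sortKey_iff {l : ι → L} (hl : Function.Injective l) {N : ℕ} (w : Fin N ≃ ι)
    (m : ι → ℕ) :
    StrictMono (fun i => OrderDual.toDual (sortKey l m (w i))) ↔
      IsChainDown (ascents l w) (m ∘ w) := by
  rw [strictMono_iff_consecutive]
  refine forall_congr' fun i => forall_congr' fun j => forall_congr' fun hij => ?_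
  rw [OrderDual.toDual_lt_toDual, sortKey_lt, mem_ascents l w i j hij]
  have hne : l (w i) ≠ l (w j) := fun h => by
    have := w.injective (hl h)
    rw [this] at hij
    omega
  simp only [Function.comp]
  rcases lt_or_gt_of_ne hne with h | h
  · simp only [h, h.not_gt]; grind
  · simp only [h, h.not_gt]; grind

/-- `(P, ω)`-partition reciprocity. Here `R` is a relation (the edges of a poset) on `ι` and `l` a
labelling; along an edge `p → q` the condition on the left is `m p ≤ m q`, strict if `l` descends,
and on the right it is `m q ≤ m p`, strict if `l` ascends. Both sides are sums over the linear
extensions of `R`, each of which contributes a chain. -/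
lemma antipode_poset [Fintype ι] {S : MvPowerSeries ℕ ℤ →ₗ[ℤ] MvPowerSeries ℕ ℤ} (hS : IsAntipode S)
    (l : ι → L) (hl : Function.Injective l) (R : ι → ι → Prop) (a : ι → ℕ) (ha : ∀ i, 0 < a i) :
    S (labelGF (fun m => ∀ p q, R p q → sortKey l m p < sortKey l m q) a) =
      ((-1 : ℤ) ^ Fintype.card ι) •
        labelGF (fun m => ∀ p q, R p q → sortKey l m q < sortKey l m p) a := by
  classical
  rw [labelGF_fiberwise (W := Fin (Fintype.card ι) ≃ ι) _
      (fun w m => StrictMono (fun i => sortKey l m (w i)))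
      (fun m _ => existsUnique_sorting _ (sortKey_injective hl m)) a ha,
    labelGF_fiberwise (W := Fin (Fintype.card ι) ≃ ι) _
      (fun w m => StrictMono (fun i => OrderDual.toDual (sortKey l m (w i))))
      (fun m _ => existsUnique_sorting (fun p => OrderDual.toDual (sortKey l m p))
        (OrderDual.toDual.injective.comp (sortKey_injective hl m))) a ha,
    map_sum, Finset.smul_sum]
  refine Finset.sum_congr rfl fun w _ => ?_
  have key : ∀ m, StrictMono (fun i => sortKey l m (w i)) → ∀ p q,
      (sortKey l m p < sortKey l m q ↔ w.symm p < w.symm q) := fun m h p q => by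
    have := h.lt_iff_lt (a := w.symm p) (b := w.symm q)
    simpa using this
  have key' : ∀ m, StrictMono (fun i => OrderDual.toDual (sortKey l m (w i))) → ∀ p q,
      (sortKey l m q < sortKey l m p ↔ w.symm p < w.symm q) := fun m h p q => by
    have := h.lt_iff_lt (a := w.symm p) (b := w.symm q)
    simpa using this
  by_cases hw : ∀ p q, R p q → w.symm p < w.symm q
  · have e1 : ∀ m, ((∀ p q, R p q → sortKey l m p < sortKey l m q) ∧
        StrictMono (fun i => sortKey l m (w i))) ↔ IsChainUp (ascents l w) (m ∘ w) := fun m => by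
      rw [← strictMono_sortKey_iff]
      exact ⟨fun h => h.2, fun h => ⟨fun p q hpq => (key m h p q).2 (hw p q hpq), h⟩⟩
    have e2 : ∀ m, ((∀ p q, R p q → sortKey l m q < sortKey l m p) ∧
        StrictMono (fun i => OrderDual.toDual (sortKey l m (w i)))) ↔
        IsChainDown (ascents l w) (m ∘ w) := fun m => by
      rw [← strictAnti_sortKey_iff hl]
      exact ⟨fun h => h.2, fun h => ⟨fun p q hpq => (key' m h p q).2 (hw p q hpq), h⟩⟩
    rw [labelGF_congr e1, labelGF_congr e2, labelGF_equiv w.symm, labelGF_equiv w.symm]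
    have e3 : ∀ g : Fin (Fintype.card ι) → ℕ, (g ∘ w.symm) ∘ w = g := fun g => by
      ext; simp
    simp only [e3]
    exact antipode_chain hS _ _ _ (fun i => ha _) (lt_of_mem_ascents l w)
  · rw [labelGF_eq_zero, labelGF_eq_zero, map_zero, smul_zero]
    · rintro m ⟨h1, h2⟩
      exact hw fun p q hpq => (key' m h2 p q).1 (h1 p q hpq)
    · rintro m ⟨h1, h2⟩
      exact hw fun p q hpq => (key m h2 p q).1 (h1 p q hpq)

end poset

/-! ### Skew tableaux -/

/-- The boxes of `λ/μ` in the first `r` rows. -/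
def boxes (r : ℕ) (lam mu : ℕ → ℕ) : Finset (ℕ × ℕ) :=
  ((Finset.range r).sigma fun i => Finset.Ico (mu i) (lam i)).image fun x => (x.1, x.2)

/-- Membership in the form required by `Finset.sum_finset_product`. -/
lemma mem_boxes' {r : ℕ} {lam mu : ℕ → ℕ} (p : ℕ × ℕ) :
    p ∈ boxes r lam mu ↔ p.1 ∈ Finset.range r ∧ p.2 ∈ Finset.Ico (mu p.1) (lam p.1) := by
  obtain ⟨i, j⟩ := p
  simp only [boxes, Finset.mem_image, Finset.mem_sigma]
  constructor
  · rintro ⟨⟨i', j'⟩, h, h'⟩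
    simp only [Prod.mk.injEq] at h'
    obtain ⟨rfl, rfl⟩ := h'
    exact h
  · exact fun h => ⟨⟨i, j⟩, h, rfl⟩

lemma mem_boxes {r : ℕ} {lam mu : ℕ → ℕ} (hr : ∀ i, r ≤ i → lam i = 0) (p : ℕ × ℕ) :
    p ∈ boxes r lam mu ↔ InSkew lam mu p := by
  rw [mem_boxes', Finset.mem_range, Finset.mem_Ico, InSkew]
  refine ⟨fun h => h.2, fun h => ⟨?_, h⟩⟩
  by_contra hn
  have := hr p.1 (by omega)
  omega

lemma card_boxes (r : ℕ) (lam mu : ℕ → ℕ) :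
    (boxes r lam mu).card = ∑ i ∈ Finset.range r, (lam i - mu i) := by
  rw [Finset.card_eq_sum_ones, Finset.sum_finset_product _ (Finset.range r)
      (fun i => Finset.Ico (mu i) (lam i)) mem_boxes']
  simp

/-- The semistandard conditions for a labelling of the boxes. -/
def IsTableau {D : Finset (ℕ × ℕ)} (m : D → ℕ) : Prop :=
  (∀ p q : D, q.1 = (p.1.1, p.1.2 + 1) → m p ≤ m q) ∧
    ∀ p q : D, q.1 = (p.1.1 + 1, p.1.2) → m p < m q

lemma schurQS_eq_labelGF (r : ℕ) (lam mu : ℕ → ℕ) (hr : ∀ i, r ≤ i → lam i = 0)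
    (γ : ℕ × ℕ → ℕ) :
    schurQS r lam mu γ = labelGF (ι := boxes r lam mu) IsTableau (fun p => γ p) := by
  classical
  funext d
  simp only [schurQS, labelGF]
  congr 1
  have hsum : ∀ m : ℕ × ℕ → ℕ, (∑ i ∈ Finset.range r, ∑ j ∈ Finset.Ico (mu i) (lam i),
      Finsupp.single (m (i, j)) (γ (i, j))) =
      ∑ p : boxes r lam mu, Finsupp.single (m p) (γ p) := fun m => by
    rw [Finset.sum_coe_sort (boxes r lam mu) (fun p => Finsupp.single (m p) (γ p)),
      Finset.sum_finset_product _ (Finset.range r)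
      (fun i => Finset.Ico (mu i) (lam i)) mem_boxes']
  refine Nat.card_congr (Equiv.ofBijective (fun x => ⟨fun p => x.1 p, ⟨?_, ?_⟩, ?_, ?_⟩) ⟨?_, ?_⟩)
  · rintro ⟨⟨i, j⟩, hp⟩ ⟨q, hq⟩ rfl
    exact x.2.1.row_le i j ((mem_boxes hr _).1 hp) ((mem_boxes hr _).1 hq)
  · rintro ⟨⟨i, j⟩, hp⟩ ⟨q, hq⟩ rfl
    exact x.2.1.col_lt i j ((mem_boxes hr _).1 hp) ((mem_boxes hr _).1 hq)
  · exact fun p => x.2.1.pos p ((mem_boxes hr _).1 p.2)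
  · rw [← hsum]; exact x.2.2
  · rintro ⟨m, hm, h⟩ ⟨m', hm', h'⟩ he
    simp only [Subtype.mk.injEq] at he ⊢
    funext p
    by_cases hp : InSkew lam mu p
    · exact congrFun he ⟨p, (mem_boxes hr _).2 hp⟩
    · rw [hm.zero_off p hp, hm'.zero_off p hp]
  · rintro ⟨g, hg, hpos, hd⟩
    have hext : ∀ p (hp : p ∈ boxes r lam mu),
        (if hp : p ∈ boxes r lam mu then g ⟨p, hp⟩ else 0) = g ⟨p, hp⟩ := fun p hp => dif_pos hp
    refine ⟨⟨fun p => if hp : p ∈ boxes r lam mu then g ⟨p, hp⟩ else 0, ⟨?_, ?_, ?_, ?_⟩, ?_⟩, ?_⟩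
    · exact fun p hp => dif_neg fun h => hp ((mem_boxes hr _).1 h)
    · intro p hp
      rw [hext p ((mem_boxes hr _).2 hp)]
      exact hpos _
    · intro i j h1 h2
      rw [hext _ ((mem_boxes hr _).2 h1), hext _ ((mem_boxes hr _).2 h2)]
      exact hg.1 _ _ rfl
    · intro i j h1 h2
      rw [hext _ ((mem_boxes hr _).2 h1), hext _ ((mem_boxes hr _).2 h2)]
      exact hg.2 _ _ rfl
    · rw [hsum (fun p => if hp : p ∈ boxes r lam mu then g ⟨p, hp⟩ else 0), ← hd]
      refine Finset.sum_congr rfl fun p _ => ?_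
      rw [hext p.1 p.2]
    · ext p
      exact hext p.1 p.2

lemma lt_conjPart_s17 {r : ℕ} {lam : ℕ → ℕ} (h : Antitone lam) {i c : ℕ} (hi : i < r) :
    i < conjPart r lam c ↔ c < lam i := by
  constructor
  · intro hlt
    by_contra hn
    -- all rows reaching column `c` lie strictly above row `i`
    have hsub : ((Finset.range r).filter fun i => c < lam i) ⊆ Finset.range i := by
      intro k hk
      rw [Finset.mem_filter] at hk
      rw [Finset.mem_range]
      by_contra hk'
      have := h (not_lt.1 hk')
      omega
    have := Finset.card_le_card hsub
    rw [Finset.card_range] at this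
    unfold conjPart at hlt
    omega
  · intro hc
    have hsub : Finset.range (i + 1) ⊆ ((Finset.range r).filter fun i => c < lam i) := by
      intro k hk
      rw [Finset.mem_range] at hk
      rw [Finset.mem_filter, Finset.mem_range]
      have := h (show k ≤ i by omega)
      exact ⟨by omega, by omega⟩
    have := Finset.card_le_card hsub
    rw [Finset.card_range] at this
    unfold conjPart
    omega

lemma conjPart_le_s17 (r : ℕ) (lam : ℕ → ℕ) (c : ℕ) : conjPart r lam c ≤ r := by
  have := Finset.card_le_card (Finset.filter_subset (fun i => c < lam i) (Finset.range r))
  rwa [Finset.card_range] at this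

/-- The parts of the anti-diagonal transpose of the complement of `μ` in the `r × s` rectangle. The
anti-diagonal transpose of `λ/μ` is the skew shape `antiConj μ / antiConj λ`. -/
def antiConj (r s : ℕ) (mu : ℕ → ℕ) (k : ℕ) : ℕ :=
  if k < s then r - conjPart r mu (s - 1 - k) else 0

/-- Reflection in the anti-diagonal maps the boxes of `ν` onto those of `ν#`. -/
lemma mem_boxes_antiConj {r s : ℕ} {lam mu : ℕ → ℕ} (hlam : Antitone lam) (hmu : Antitone mu)
    {i j : ℕ} (hi : i < r) (hj : j < s) :
    (s - 1 - j, r - 1 - i) ∈ boxes s (antiConj r s mu) (antiConj r s lam) ↔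
      (i, j) ∈ boxes r lam mu := by
  have h1 := lt_conjPart_s17 hlam (c := j) hi
  have h2 := lt_conjPart_s17 hmu (c := j) hi
  have h3 := conjPart_le_s17 r lam j
  have h4 := conjPart_le_s17 r mu j
  rw [mem_boxes', mem_boxes']
  simp only [Finset.mem_range, Finset.mem_Ico, antiConj]
  rw [if_pos (by omega), if_pos (by omega), show s - 1 - (s - 1 - j) = j by omega]
  omega

/-- The anti-diagonal reflection as a bijection between the boxes of `ν#` and of `ν`. -/
def reflectBoxes {r s : ℕ} {lam mu : ℕ → ℕ} (hlam : Antitone lam) (hmu : Antitone mu)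
    (hs : ∀ i, lam i ≤ s) :
    boxes s (antiConj r s mu) (antiConj r s lam) ≃ boxes r lam mu where
  toFun p := ⟨(r - 1 - p.1.2, s - 1 - p.1.1), by
    obtain ⟨⟨k, c⟩, hp⟩ := p
    have h := (mem_boxes' _).1 hp
    simp only [Finset.mem_range, Finset.mem_Ico, antiConj] at h
    rw [if_pos h.1, if_pos h.1] at h
    refine (mem_boxes_antiConj (s := s) hlam hmu (i := r - 1 - c) (j := s - 1 - k)
      (by omega) (by omega)).1 ?_
    rwa [show s - 1 - (s - 1 - k) = k by omega, show r - 1 - (r - 1 - c) = c by omega]⟩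
  invFun p := ⟨(s - 1 - p.1.2, r - 1 - p.1.1), by
    obtain ⟨⟨i, j⟩, hp⟩ := p
    have h := (mem_boxes' _).1 hp
    simp only [Finset.mem_range, Finset.mem_Ico] at h
    have := hs i
    exact (mem_boxes_antiConj hlam hmu (i := i) (j := j) h.1 (by omega)).2 hp⟩
  left_inv p := by
    obtain ⟨⟨k, c⟩, hp⟩ := p
    have h := (mem_boxes' _).1 hp
    simp only [Finset.mem_range, Finset.mem_Ico, antiConj] at h
    rw [if_pos h.1, if_pos h.1] at h
    simp only [Subtype.mk.injEq, Prod.mk.injEq]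
    omega
  right_inv p := by
    obtain ⟨⟨i, j⟩, hp⟩ := p
    have h := (mem_boxes' _).1 hp
    simp only [Finset.mem_range, Finset.mem_Ico] at h
    have := hs i
    simp only [Subtype.mk.injEq, Prod.mk.injEq]
    omega

/-- Labels of the boxes increasing along rows and decreasing down columns. -/
def boxLabel {D : Finset (ℕ × ℕ)} (p : D) : ℕ ×ₗ ℕᵒᵈ := toLex (p.1.2, OrderDual.toDual p.1.1)

lemma boxLabel_injective {D : Finset (ℕ × ℕ)} : Function.Injective (boxLabel (D := D)) := by
  rintro ⟨⟨i, j⟩, hp⟩ ⟨⟨i', j'⟩, hq⟩ h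
  have : (j, OrderDual.toDual i) = (j', OrderDual.toDual i') := toLex.injective h
  simp only [Prod.mk.injEq, OrderDual.toDual_inj] at this
  simp [this.1, this.2]

/-- Adjacency of boxes: `q` is the right or the lower neighbour of `p`. -/
def Adjacent {D : Finset (ℕ × ℕ)} (p q : D) : Prop :=
  q.1 = (p.1.1, p.1.2 + 1) ∨ q.1 = (p.1.1 + 1, p.1.2)

lemma boxLabel_row {D : Finset (ℕ × ℕ)} {p q : D} (h : q.1 = (p.1.1, p.1.2 + 1)) :
    boxLabel p < boxLabel q := by
  simp [boxLabel, Prod.Lex.toLex_lt_toLex, h]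

lemma boxLabel_col {D : Finset (ℕ × ℕ)} {p q : D} (h : q.1 = (p.1.1 + 1, p.1.2)) :
    boxLabel q < boxLabel p := by
  rw [boxLabel, boxLabel, h]
  exact Prod.Lex.toLex_lt_toLex.2
    (Or.inr ⟨rfl, OrderDual.toDual_lt_toDual.2 (Nat.lt_succ_self _)⟩)

lemma isTableau_iff {D : Finset (ℕ × ℕ)} (m : D → ℕ) :
    IsTableau m ↔ ∀ p q, Adjacent p q → sortKey boxLabel m p < sortKey boxLabel m q := by
  simp only [sortKey_lt]
  constructor
  · rintro ⟨h1, h2⟩ p q (h | h)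
    · have := h1 p q h
      have := boxLabel_row h
      grind
    · exact Or.inl (h2 p q h)
  · refine fun H => ⟨fun p q h => ?_, fun p q h => ?_⟩
    · rcases H p q (Or.inl h) with h' | h'
      · exact h'.le
      · exact h'.1.le
    · rcases H p q (Or.inr h) with h' | h'
      · exact h'
      · exact absurd h'.2 (boxLabel_col h).not_gt

/-- Under the reflection, tableaux of shape `ν#` are the labellings of `ν` that strictly decrease
along rows and weakly decrease down columns. -/
lemma isTableau_reflect_iff {r s : ℕ} {lam mu : ℕ → ℕ} (hlam : Antitone lam) (hmu : Antitone mu)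
    (hs : ∀ i, lam i ≤ s) (m : boxes r lam mu → ℕ) :
    IsTableau (m ∘ reflectBoxes hlam hmu hs) ↔
      ∀ p q, Adjacent p q → sortKey boxLabel m q < sortKey boxLabel m p := by
  have key : IsTableau (m ∘ reflectBoxes hlam hmu hs) ↔
      (∀ p q : boxes r lam mu, q.1 = (p.1.1 + 1, p.1.2) → m q ≤ m p) ∧
        ∀ p q : boxes r lam mu, q.1 = (p.1.1, p.1.2 + 1) → m q < m p := by
    have hb : ∀ p : boxes r lam mu, p.1.1 < r ∧ p.1.2 < s := fun p => by
      have h := (mem_boxes' _).1 p.2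
      simp only [Finset.mem_range, Finset.mem_Ico] at h
      have := hs p.1.1
      omega
    have hval : ∀ p, (((reflectBoxes hlam hmu hs).symm p).1 : ℕ × ℕ)
      = (s - 1 - p.1.2, r - 1 - p.1.1) := fun p => rfl
    simp only [IsTableau, (reflectBoxes hlam hmu hs).symm.surjective.forall, hval,
      Function.comp, Equiv.apply_symm_apply, Prod.ext_iff]
    constructor
    · rintro ⟨h1, h2⟩
      refine ⟨fun p q h => h1 q p ?_, fun p q h => h2 q p ?_⟩
      · have := hb p; have := hb q; omega
      · have := hb p; have := hb q; omega
    · rintro ⟨h1, h2⟩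
      refine ⟨fun p q h => h1 q p ?_, fun p q h => h2 q p ?_⟩
      · have := hb p; have := hb q; omega
      · have := hb p; have := hb q; omega
  rw [key]
  simp only [sortKey_lt]
  constructor
  · rintro ⟨h1, h2⟩ p q (h | h)
    · exact Or.inl (h2 p q h)
    · have := h1 p q h
      have := boxLabel_col h
      grind
  · refine fun H => ⟨fun p q h => ?_, fun p q h => ?_⟩
    · rcases H p q (Or.inr h) with h' | h'
      · exact h'.le
      · exact h'.1.le
    · rcases H p q (Or.inl h) with h' | h'
      · exact h'
      · exact absurd h'.2 (boxLabel_row h).not_gt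

end SMZ

/-- The antipode `S` of the Hopf algebra `QSym` of quasi-symmetric functions (characterized
on the basis of monomial quasi-symmetric functions by Hoffman's formula
`S(M_γ) = (-1)^{ℓ(γ)} E_{reverse γ}`) sends the Schur type quasi-symmetric function of a
skew shape `ν = λ/μ` (contained in an `r × s'` rectangle) to `(-1)^{|ν|}` times the Schur
type quasi-symmetric function of the anti-diagonal transpose `ν^#` with the transposed
filling `γ^#`. -/
theorem antipode_schurQS
    (r s' : ℕ) (lam mu : ℕ → ℕ) (hlm : SMZ.IsSkewPairWith r lam mu)
    (hbound : ∀ i, lam i ≤ s')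
    (γ : ℕ × ℕ → ℕ) (hpos : ∀ p, SMZ.InSkew lam mu p → 0 < γ p)
    (S : MvPowerSeries ℕ ℤ →ₗ[ℤ] MvPowerSeries ℕ ℤ)
    (hS : ∀ (n : ℕ) (c : Fin n → ℕ), (∀ i, 0 < c i) →
      S (SMZ.Mqsym c) = ((-1 : ℤ) ^ n) • SMZ.Eqsym fun i => c i.rev) :
    S (SMZ.schurQS r lam mu γ) =
      ((-1 : ℤ) ^ (∑ i ∈ Finset.range r, (lam i - mu i))) •
        SMZ.schurQS s'
          (fun k => if k < s' then r - SMZ.conjPart r mu (s' - 1 - k) else 0)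
          (fun k => if k < s' then r - SMZ.conjPart r lam (s' - 1 - k) else 0)
          (fun p => γ (r - 1 - p.2, s' - 1 - p.1)) := by
  obtain ⟨hlam, hmu, -, hr⟩ := hlm
  rw [SMZ.schurQS_eq_labelGF r lam mu hr, SMZ.labelGF_congr SMZ.isTableau_iff,
    SMZ.antipode_poset hS _ SMZ.boxLabel_injective _ _
      (fun p => hpos p ((SMZ.mem_boxes hr _).1 p.2)), Fintype.card_coe, SMZ.card_boxes]
  congr 1
  change _ = SMZ.schurQS s' (SMZ.antiConj r s' mu) (SMZ.antiConj r s' lam) _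
  rw [SMZ.schurQS_eq_labelGF s' (SMZ.antiConj r s' mu) _ (fun k hk => if_neg (not_lt.2 hk)),
    SMZ.labelGF_equiv (SMZ.reflectBoxes hlam hmu hbound),
    SMZ.labelGF_congr (SMZ.isTableau_reflect_iff hlam hmu hbound)]
  congr 1
  funext p
  -- reflecting twice is the identity
  exact congrArg (fun q => γ q.1) ((SMZ.reflectBoxes hlam hmu hbound).apply_symm_apply p).symm
end
end
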